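/- Let f, h ∈ O_n with μ_X(f) < ∞ and μ_Y(h) < ∞, where X = h^{-1}(0) and Y = f^{-1}(0) are hypersurface germs with isolated singularities. Then μ_X(f) = τ_X(f) if and only if the following three conditions hold: μ(f) = τ(f), μ(h) = τ(h), and dim_ℂ O_n/(⟨f⟩ + J(f,h)) − μ(f) = dim_ℂ Θ/(Θ_X + Θ_Y). -/

import Mathlib

open Filter Topology Polynomial

set_option maxHeartbeats 1000000
set_option synthInstance.maxHeartbeats 1000000

noncomputable section

/-- The algebra structure on germs of complex valued functions. -/
instance Filter.Germ.instAlgebraComplex {α : Type*} (l : Filter α) :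
    Algebra ℂ (Filter.Germ l ℂ) where
  algebraMap := (Filter.Germ.coeRingHom l).comp (algebraMap ℂ (α → ℂ))
  commutes' := fun c g => mul_comm _ _
  smul_def' := fun c g => Filter.Germ.inductionOn g fun f => rfl

/-- The local algebra `𝒪ₙ` of germs at `0 ∈ ℂⁿ` of holomorphic functions,
realized as the subalgebra of germs at `0` admitting an analytic representative. -/
def On (n : ℕ) : Subalgebra ℂ (Filter.Germ (𝓝 (0 : Fin n → ℂ)) ℂ) where
  carrier := {g | ∃ f : (Fin n → ℂ) → ℂ,
    AnalyticAt ℂ f 0 ∧ (f : Filter.Germ (𝓝 (0 : Fin n → ℂ)) ℂ) = g}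
  mul_mem' := by
    rintro a b ⟨f, hf, rfl⟩ ⟨g, hg, rfl⟩
    exact ⟨f * g, hf.mul hg, rfl⟩
  add_mem' := by
    rintro a b ⟨f, hf, rfl⟩ ⟨g, hg, rfl⟩
    exact ⟨f + g, hf.add hg, rfl⟩
  algebraMap_mem' := fun c => ⟨fun _ => c, analyticAt_const, rfl⟩

variable {n : ℕ}

/-- Existence of an analytic representative for an element of `𝒪ₙ`. -/
lemma On.exists_rep (g : On n) : ∃ f : (Fin n → ℂ) → ℂ,
    AnalyticAt ℂ f 0 ∧ (f : Filter.Germ (𝓝 (0 : Fin n → ℂ)) ℂ) = (g : Filter.Germ _ ℂ) :=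
  g.2

/-- A chosen analytic representative of a germ in `𝒪ₙ`. -/
def On.rep (g : On n) : (Fin n → ℂ) → ℂ := (On.exists_rep g).choose

lemma On.rep_analyticAt (g : On n) : AnalyticAt ℂ (On.rep g) 0 :=
  (On.exists_rep g).choose_spec.1

lemma On.rep_spec (g : On n) :
    (On.rep g : Filter.Germ (𝓝 (0 : Fin n → ℂ)) ℂ) = (g : Filter.Germ _ ℂ) :=
  (On.exists_rep g).choose_spec.2

/-- Build an element of `𝒪ₙ` from an analytic function. -/
def mkOn {n : ℕ} (f : (Fin n → ℂ) → ℂ) (hf : AnalyticAt ℂ f 0) : On n :=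
  ⟨(f : Filter.Germ (𝓝 (0 : Fin n → ℂ)) ℂ), ⟨f, hf, rfl⟩⟩

/-- The `i`-th partial derivative, as an operation on `𝒪ₙ`. -/
def pd (i : Fin n) (g : On n) : On n :=
  mkOn (fun x => fderiv ℂ (On.rep g) x (Pi.single i 1)) (by
    have h := ((ContinuousLinearMap.apply ℂ ℂ (Pi.single i 1)).analyticAt
      (fderiv ℂ (On.rep g) 0)).comp (On.rep_analyticAt g).fderiv
    exact h)

/-- Restriction of germs at `0` to germs along a finer filter. -/
def restrictGerm {l : Filter (Fin n → ℂ)} (hl : l ≤ 𝓝 (0 : Fin n → ℂ)) :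
    Filter.Germ (𝓝 (0 : Fin n → ℂ)) ℂ →+* Filter.Germ l ℂ where
  toFun g := g.compTendsto id (Filter.tendsto_id'.2 hl)
  map_one' := rfl
  map_mul' a b := Filter.Germ.inductionOn₂ a b fun f g => rfl
  map_zero' := rfl
  map_add' a b := Filter.Germ.inductionOn₂ a b fun f g => rfl

/-- Evaluation of germs restricted along `l ≤ 𝓝 0`, as a ring homomorphism on `𝒪ₙ`. -/
def restrictOn (n : ℕ) {l : Filter (Fin n → ℂ)} (hl : l ≤ 𝓝 (0 : Fin n → ℂ)) :
    On n →+* Filter.Germ l ℂ :=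
  (restrictGerm hl).comp (On n).val.toRingHom

/-- The ideal `I_X ⊆ 𝒪ₙ` of germs vanishing on a set `X` near `0`. -/
def IX (n : ℕ) (X : Set (Fin n → ℂ)) : Ideal (On n) :=
  RingHom.ker (restrictOn n (nhdsWithin_le_nhds (s := X)))

/-- The maximal ideal `𝔪 ⊂ 𝒪ₙ` of germs vanishing at the origin. -/
def mId (n : ℕ) : Ideal (On n) :=
  RingHom.ker (restrictOn n (pure_le_nhds (0 : Fin n → ℂ)))

/-- `X` is the germ at `0` of an analytic variety: `0 ∈ X` and, near `0`, `X` coincides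
with the common zero locus of finitely many holomorphic functions. -/
def IsAnalyticGermAt0 (n : ℕ) (X : Set (Fin n → ℂ)) : Prop :=
  (0 : Fin n → ℂ) ∈ X ∧
    ∃ (m : ℕ) (g : Fin m → (Fin n → ℂ) → ℂ),
      (∀ j, AnalyticAt ℂ (g j) 0) ∧
      ∀ᶠ x in 𝓝 (0 : Fin n → ℂ), (x ∈ X ↔ ∀ j, g j x = 0)

/-- The action `δ(g) = Σ δᵢ ∂g/∂xᵢ` of a vector field `δ ∈ Θ ≅ 𝒪ₙⁿ` on `g ∈ 𝒪ₙ`. -/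
def applyVF (δ : Fin n → On n) (g : On n) : On n := ∑ i, δ i * pd i g

lemma applyVF_add (a b : Fin n → On n) (g : On n) :
    applyVF (a + b) g = applyVF a g + applyVF b g := by
  simp [applyVF, add_mul, Finset.sum_add_distrib]

lemma applyVF_smul (c : On n) (a : Fin n → On n) (g : On n) :
    applyVF (c • a) g = c * applyVF a g := by
  simp [applyVF, Finset.mul_sum, smul_eq_mul, mul_assoc]

/-- For fixed `f`, the map `δ ↦ δ(f)` as an `𝒪ₙ`-linear map `Θ → 𝒪ₙ`. -/
def gradMap (n : ℕ) (f : On n) : (Fin n → On n) →ₗ[On n] On n where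
  toFun δ := applyVF δ f
  map_add' a b := applyVF_add a b f
  map_smul' c a := applyVF_smul c a f

/-- The module `Θ_X` of logarithmic vector fields of `X`, i.e. vector fields
preserving the ideal `I_X`. -/
def ThetaX (n : ℕ) (X : Set (Fin n → ℂ)) : Submodule (On n) (Fin n → On n) where
  carrier := {δ | ∀ g ∈ IX n X, applyVF δ g ∈ IX n X}
  add_mem' := by
    intro a b ha hb g hg
    rw [applyVF_add]
    exact Ideal.add_mem _ (ha g hg) (hb g hg)
  zero_mem' := by
    intro g hg
    have h0 : applyVF (0 : Fin n → On n) g = 0 := by simp [applyVF]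
    rw [h0]; exact Ideal.zero_mem _
  smul_mem' := by
    intro c a ha g hg
    rw [applyVF_smul]
    exact Ideal.mul_mem_left _ _ (ha g hg)

/-- The module `Θ_Y` of vector fields tangent to the hypersurface `Y = f⁻¹(0)`,
i.e. `δ(f) ∈ ⟨f⟩`. -/
def ThetaF (n : ℕ) (f : On n) : Submodule (On n) (Fin n → On n) :=
  Submodule.comap (gradMap n f) (Ideal.span {f})

/-- The module `H_Y` of Hamiltonian vector fields of `f`, i.e. `δ(f) = 0`. -/
def HamF (n : ℕ) (f : On n) : Submodule (On n) (Fin n → On n) :=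
  LinearMap.ker (gradMap n f)

/-- The Bruce–Roberts ideal `df(Θ_X) ⊆ 𝒪ₙ`. -/
def BRIdeal (n : ℕ) (X : Set (Fin n → ℂ)) (f : On n) : Ideal (On n) :=
  Submodule.map (gradMap n f) (ThetaX n X)

/-- The Jacobian ideal `J(f) = ⟨∂f/∂x₁, …, ∂f/∂xₙ⟩`. -/
def Jac (n : ℕ) (f : On n) : Ideal (On n) :=
  Ideal.span (Set.range fun i => pd i f)

/-- The ideal `J(f,h)` generated by the `2×2` minors of the Jacobian matrix of `(f,h)`. -/
def Jmin (n : ℕ) (f h : On n) : Ideal (On n) :=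
  Ideal.span (Set.range fun p : Fin n × Fin n => pd p.1 f * pd p.2 h - pd p.2 f * pd p.1 h)

/-- The Milnor number `μ(f)`. -/
def mu (n : ℕ) (f : On n) : ℕ := Module.finrank ℂ (On n ⧸ Jac n f)

/-- The Tjurina number `τ(f)`. -/
def tau (n : ℕ) (f : On n) : ℕ :=
  Module.finrank ℂ (On n ⧸ (Jac n f + Ideal.span {f}))

/-- The Bruce–Roberts Milnor number `μ_X(f)`. -/
def muX (n : ℕ) (X : Set (Fin n → ℂ)) (f : On n) : ℕ :=
  Module.finrank ℂ (On n ⧸ BRIdeal n X f)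

/-- The Bruce–Roberts Tjurina number `τ_X(f)`. -/
def tauX (n : ℕ) (X : Set (Fin n → ℂ)) (f : On n) : ℕ :=
  Module.finrank ℂ (On n ⧸ (BRIdeal n X f + Ideal.span {f}))

/-- The value at the origin of a germ in `𝒪ₙ`. -/
def ev0 (g : On n) : ℂ := On.rep g 0

/-- The linear part `j¹δ` of a vector field `δ`, as the matrix `(∂δⱼ/∂xᵢ)(0)`. -/
def linPart (δ : Fin n → On n) : Matrix (Fin n) (Fin n) ℂ :=
  Matrix.of fun i j => ev0 (pd i (δ j))

/-- The eigenvalues (with multiplicities) of the linear part of `δ` are given by `w`. -/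
def EigsEq (δ : Fin n → On n) (w : Fin n → ℚ) : Prop :=
  (linPart δ).charpoly = ∏ i, (Polynomial.X - Polynomial.C ((w i : ℂ)))

/-- The germ at `0` of the coordinate function `xᵢ`. -/
def coordG (i : Fin n) : On n :=
  mkOn (fun x : Fin n → ℂ => x i)
    ((ContinuousLinearMap.proj (R := ℂ) (φ := fun _ : Fin n => ℂ) i).analyticAt _)

/-- `g` is quasihomogeneous of degree `d` with respect to the weights `w` (in the given
coordinates): the Euler identity `Σ wᵢ xᵢ ∂g/∂xᵢ = d g` holds. -/
def IsQH (n : ℕ) (w : Fin n → ℚ) (d : ℚ) (g : On n) : Prop :=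
  ∑ i, (w i : ℂ) • (coordG i * pd i g) = (d : ℂ) • g

/-- A germ of a biholomorphic change of coordinates at `0 ∈ ℂⁿ`. -/
structure CoordChange (n : ℕ) where
  toFun : (Fin n → ℂ) → (Fin n → ℂ)
  invFun : (Fin n → ℂ) → (Fin n → ℂ)
  analyticAt : AnalyticAt ℂ toFun 0
  inv_analyticAt : AnalyticAt ℂ invFun 0
  map_zero : toFun 0 = 0
  inv_map_zero : invFun 0 = 0
  left_inv : ∀ᶠ x in 𝓝 (0 : Fin n → ℂ), invFun (toFun x) = x
  right_inv : ∀ᶠ x in 𝓝 (0 : Fin n → ℂ), toFun (invFun x) = x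

lemma CoordChange.tendsto (φ : CoordChange n) :
    Filter.Tendsto φ.toFun (𝓝 (0 : Fin n → ℂ)) (𝓝 (0 : Fin n → ℂ)) := by
  have h := φ.analyticAt.continuousAt
  rwa [ContinuousAt, φ.map_zero] at h

/-- The pullback (composition) of a germ `g ∈ 𝒪ₙ` under a change of coordinates. -/
def pullback (φ : CoordChange n) (g : On n) : On n :=
  ⟨(g : Filter.Germ (𝓝 (0 : Fin n → ℂ)) ℂ).compTendsto φ.toFun φ.tendsto, by
    refine ⟨On.rep g ∘ φ.toFun, ?_, ?_⟩
    · have h := On.rep_analyticAt g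
      rw [← φ.map_zero] at h
      exact h.comp φ.analyticAt
    · rw [← On.rep_spec g]
      exact (Filter.Germ.coe_compTendsto _ φ.tendsto).symm⟩

/-- Definition 1.1: the pair `(f, X)` is relatively quasihomogeneous with respect to the
weights `w`: in suitable coordinates, `f` is quasihomogeneous of degree `1` and `I_X` admits
a system of quasihomogeneous generators of positive degrees, all with respect to `w`. -/
def RelQH (n : ℕ) (X : Set (Fin n → ℂ)) (f : On n) (w : Fin n → ℚ) : Prop :=
  ∃ φ : CoordChange n,
    IsQH n w 1 (pullback φ f) ∧
    ∃ (m : ℕ) (h : Fin m → On n) (d : Fin m → ℚ),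
      Ideal.span (Set.range h) = IX n X ∧ (∀ j, 0 < d j) ∧
      ∀ j, IsQH n w (d j) (pullback φ (h j))

/-- The variety `X` is quasihomogeneous with respect to the weights `w`: in suitable
coordinates, `I_X` admits a system of quasihomogeneous generators of positive degrees. -/
def VarQH (n : ℕ) (X : Set (Fin n → ℂ)) (w : Fin n → ℚ) : Prop :=
  ∃ φ : CoordChange n,
    ∃ (m : ℕ) (h : Fin m → On n) (d : Fin m → ℚ),
      Ideal.span (Set.range h) = IX n X ∧ (∀ j, 0 < d j) ∧
      ∀ j, IsQH n w (d j) (pullback φ (h j))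

instance (f : On n) : HasQuotient (↥(ThetaF n f)) (Submodule ↥(On n) ↥(ThetaF n f)) :=
  Submodule.hasQuotient (R := On n) (M := ThetaF n f)

/-!
As all colengths are finite, `μ_X(f) = τ_X(f)` means `f ∈ df(Θ_X)`, and likewise `μ = τ` means
that the germ lies in its Jacobian ideal. In at least two variables `I_X = ⟨h⟩`, and the partial
derivatives of `h` form a regular sequence, so by Koszul exactness the fields killing `h` are
generated by the Hamiltonian ones, whose values on `f` span `J(f, h)`.

The key point, symmetric in `f` and `h`, is that if `δ f = f` and `δ h = b h`, then `b` is a unit.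
The weights of `δ` are the eigenvalues of its linear part; if `b(0) = 0`, their extreme real parts
satisfy `min ≤ -max` because of `h` and `1 - min ≤ max` because of `f`. Granting this,
`f ∈ df(Θ_X)` holds exactly when `f` and `h` lie in their Jacobian ideals and
`df(Θ_X) ⊆ ⟨f⟩ + J(f, h)`, and this inclusion becomes the third condition through
`τ_X(f) = τ(f) + dim Θ / (Θ_X + Θ_Y)`.
-/

section ParameterIntegrals

open MeasureTheory NNReal ENNReal

variable {W : Type*} [NormedAddCommGroup W] [NormedSpace ℂ W]
  {E : Type*} [NormedAddCommGroup E] [NormedSpace ℂ E]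

lemma hasSum_intervalIntegral_of_bound {P : ℝ → FormalMultilinearSeries ℂ W E} {F : ℝ → E}
    {a b : ℝ} {ρ : ℝ≥0} {B : ℕ → ℝ≥0} {y : W} (hy : ‖y‖ ≤ ρ)
    (hF : ∀ t ∈ Set.uIcc a b, HasSum (fun k => P t k fun _ => y) (F t))
    (hP : ∀ k, ContinuousOn (fun t => P t k) (Set.uIcc a b))
    (hB : ∀ k, ∀ t ∈ Set.uIcc a b, ‖P t k‖ ≤ B k) (hsum : Summable fun k => B k * ρ ^ k) :
    HasSum (fun k => ∫ t in a..b, P t k fun _ => y) (∫ t in a..b, F t) := by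
  refine intervalIntegral.hasSum_integral_of_dominated_convergence
    (fun k _ => ((B k * ρ ^ k : ℝ≥0) : ℝ)) (fun k => ?_) (fun k => ae_of_all _ fun t ht => ?_)
    (ae_of_all _ fun _ _ => by exact_mod_cast hsum) intervalIntegrable_const
    (ae_of_all _ fun t ht => hF t (Set.uIoc_subset_uIcc ht))
  · exact (((ContinuousMultilinearMap.apply ℂ (fun _ : Fin k => W) E
      (fun _ => y)).continuous.comp_continuousOn (hP k)).mono
        Set.uIoc_subset_uIcc).aestronglyMeasurable measurableSet_uIoc
  · refine ((P t k).le_opNorm _).trans ?_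
    rw [Finset.prod_const, Finset.card_univ, Fintype.card_fin]
    push_cast
    gcongr
    exact hB k t (Set.uIoc_subset_uIcc ht)

lemma exists_summable_bound_changeOrigin (p : FormalMultilinearSeries ℂ W E) {ρ : ℝ≥0}
    (hρ : (ρ + ρ : ℝ≥0∞) < p.radius) :
    ∃ B : ℕ → ℝ≥0, (Summable fun k => B k * ρ ^ k) ∧
      ∀ k, ∀ v : W, ‖v‖₊ < ρ → ‖p.changeOrigin v k‖ ≤ B k := by
  have hρp : (ρ : ℝ≥0∞) < p.radius := lt_of_le_of_lt le_self_add hρ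
  refine ⟨fun k => ∑' s : Σ l : ℕ, { s : Finset (Fin (k + l)) // s.card = l },
    ‖p (k + s.1)‖₊ * ρ ^ s.1, ?_, fun k v hv => ?_⟩
  · simpa only [← NNReal.tsum_mul_right] using
      (NNReal.summable_sigma.1 (p.changeOriginSeries_summable_aux₁ hρ)).2
  · have hvp : (‖v‖₊ : ℝ≥0∞) < p.radius := lt_trans (by exact_mod_cast hv) hρp
    refine NNReal.coe_le_coe.2 ((p.nnnorm_changeOrigin_le k hvp).trans ?_)
    refine Summable.tsum_le_tsum (fun s => ?_) (p.changeOriginSeries_summable_aux₂ hvp k)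
      (p.changeOriginSeries_summable_aux₂ hρp k)
    gcongr

variable [CompleteSpace E]

lemma intervalIntegral_apply_const {k : ℕ} {p : ℝ → W [×k]→L[ℂ] E} {a b : ℝ}
    (hp : ContinuousOn p (Set.uIcc a b)) (y : W) :
    (∫ t in a..b, p t) (fun _ => y) = ∫ t in a..b, p t (fun _ => y) :=
  (ContinuousLinearMap.intervalIntegral_comp_comm
    (ContinuousMultilinearMap.apply ℂ (fun _ : Fin k => W) E fun _ => y)
    hp.intervalIntegrable).symm

lemma hasFPowerSeriesOnBall_intervalIntegral {P : ℝ → FormalMultilinearSeries ℂ W E}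
    {F : ℝ → W → E} {a b : ℝ} {ρ : ℝ≥0} (hρ : 0 < ρ) {B : ℕ → ℝ≥0}
    (hF : ∀ t ∈ Set.uIcc a b, ∀ y : W, ‖y‖ < ρ → HasSum (fun k => P t k fun _ => y) (F t y))
    (hP : ∀ k, ContinuousOn (fun t => P t k) (Set.uIcc a b))
    (hB : ∀ k, ∀ t ∈ Set.uIcc a b, ‖P t k‖ ≤ B k) (hsum : Summable fun k => B k * ρ ^ k) :
    HasFPowerSeriesOnBall (fun y => ∫ t in a..b, F t y) (fun k => ∫ t in a..b, P t k) 0 ρ := by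
  refine ⟨?_, by exact_mod_cast hρ, fun {y} hy => ?_⟩
  · refine FormalMultilinearSeries.le_radius_of_bound _
      ((∑' k, B k * ρ ^ k : ℝ≥0) * |b - a|) fun k => ?_
    have hint : ‖∫ t in a..b, P t k‖ ≤ B k * |b - a| :=
      intervalIntegral.norm_integral_le_of_norm_le_const fun t ht =>
        hB k t (Set.uIoc_subset_uIcc ht)
    have hterm : (B k : ℝ) * (ρ : ℝ) ^ k ≤ ((∑' k, B k * ρ ^ k : ℝ≥0) : ℝ) := by
      exact_mod_cast hsum.le_tsum k fun _ _ => zero_le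
    calc ‖∫ t in a..b, P t k‖ * (ρ : ℝ) ^ k ≤ (B k * |b - a|) * (ρ : ℝ) ^ k := by gcongr
      _ = (B k * (ρ : ℝ) ^ k) * |b - a| := by ring
      _ ≤ _ := by gcongr
  · have hy' : ‖y‖ < ρ := by
      rw [mem_eball_zero_iff] at hy
      exact_mod_cast hy
    simpa only [zero_add, intervalIntegral_apply_const (hP _)] using
      hasSum_intervalIntegral_of_bound hy'.le (fun t ht => hF t ht y hy') hP hB hsum

lemma analyticAt_intervalIntegral_of_ball {g : W → E} {p : FormalMultilinearSeries ℂ W E}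
    {r : ℝ≥0∞} {c : W} (hp : HasFPowerSeriesOnBall g p c r) {ρ : ℝ≥0} (hρ0 : 0 < ρ)
    (hρ : (ρ + ρ : ℝ≥0∞) < r) {γ : ℝ → W} (hγ : Continuous γ) {a b : ℝ}
    (hnear : ∀ t ∈ Set.uIcc a b, ‖γ t - c‖₊ < ρ) :
    AnalyticAt ℂ (fun y => ∫ t in a..b, g (γ t + y)) 0 := by
  have hρr : (ρ : ℝ≥0∞) < r := lt_of_le_of_lt le_self_add hρ
  obtain ⟨B, hsum, hB⟩ := exists_summable_bound_changeOrigin p (hρ.trans_le hp.r_le)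
  refine (hasFPowerSeriesOnBall_intervalIntegral (P := fun t => p.changeOrigin (γ t - c)) hρ0
    (fun t ht y hy => ?_) (fun k => ?_) (fun k t ht => hB k _ (hnear t ht)) hsum).analyticAt
  · have hγr : (‖γ t - c‖₊ : ℝ≥0∞) < r := lt_trans (by exact_mod_cast hnear t ht) hρr
    have hyr : y ∈ Metric.eball (0 : W) (r - ‖γ t - c‖₊) := by
      rw [mem_eball_zero_iff, lt_tsub_iff_right]
      refine lt_of_le_of_lt (add_le_add ?_ ?_) hρ
      · exact_mod_cast hy.le
      · exact_mod_cast (hnear t ht).le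
    simpa using (hp.changeOrigin hγr).hasSum hyr
  · refine (p.hasFPowerSeriesOnBall_changeOrigin k
      (zero_le.trans_lt (hρr.trans_le hp.r_le))).continuousOn.comp (by fun_prop) fun t ht => ?_
    rw [mem_eball_zero_iff]
    exact lt_trans (by exact_mod_cast hnear t ht) (hρr.trans_le hp.r_le)

lemma exists_analyticAt_intervalIntegral_near {g : W → E} {γ : ℝ → W} (hγ : Continuous γ)
    {t₀ : ℝ} (hg : AnalyticAt ℂ g (γ t₀)) :
    ∃ ε > 0, ∀ a b : ℝ, |a - t₀| < ε → |b - t₀| < ε →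
      AnalyticAt ℂ (fun y => ∫ t in a..b, g (γ t + y)) 0 := by
  obtain ⟨p, r, hp⟩ := hg
  obtain ⟨ρ, hρ0, hρ⟩ := ENNReal.lt_iff_exists_nnreal_btwn.1 (ENNReal.half_pos hp.r_pos.ne')
  have hρρ : (ρ + ρ : ℝ≥0∞) < r := ENNReal.add_halves r ▸ ENNReal.add_lt_add hρ hρ
  obtain ⟨ε, hε, hball⟩ := Metric.continuousAt_iff.1 hγ.continuousAt ρ (by exact_mod_cast hρ0)
  refine ⟨ε, hε, fun a b ha hb => analyticAt_intervalIntegral_of_ball hp (by exact_mod_cast hρ0)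
    hρρ hγ fun t ht => ?_⟩
  have ht₀ : dist t t₀ < ε :=
    (convex_ball t₀ ε).ordConnected.uIcc_subset (Metric.mem_ball.2 ha) (Metric.mem_ball.2 hb) ht
  have hγt := hball ht₀
  rw [dist_eq_norm] at hγt
  exact_mod_cast hγt

lemma analyticAt_intervalIntegral {g : W → E} {γ : ℝ → W} (hγ : Continuous γ) {a b : ℝ}
    (hab : a ≤ b) (hg : ∀ t ∈ Set.Icc a b, AnalyticAt ℂ g (γ t)) :
    AnalyticAt ℂ (fun y => ∫ t in a..b, g (γ t + y)) 0 := by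
  choose! ε hε h using fun t (ht : t ∈ Set.Icc a b) =>
    exists_analyticAt_intervalIntegral_near hγ (hg t ht)
  obtain ⟨t, ht0, hmono, ⟨m, hm⟩, hsub⟩ := exists_monotone_Icc_subset_open_cover_Icc hab
    (c := fun i : Set.Icc a b => {s : Set.Icc a b | |(s : ℝ) - i| < ε i})
    (fun i => isOpen_lt (by fun_prop) continuous_const)
    (fun i _ => Set.mem_iUnion.2 ⟨i, by simpa using hε i i.2⟩)
  have hpieces : AnalyticAt ℂ (fun y => ∑ k ∈ Finset.range m,
      ∫ s in (t k : ℝ)..(t (k + 1) : ℝ), g (γ s + y)) 0 := by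
    refine Finset.analyticAt_fun_sum _ fun k _ => ?_
    obtain ⟨i, hi⟩ := hsub k
    exact h i i.2 _ _ (hi ⟨le_rfl, hmono k.le_succ⟩) (hi ⟨hmono k.le_succ, le_rfl⟩)
  have hnear : ∀ᶠ y in 𝓝 (0 : W), ∀ s ∈ Set.Icc a b, AnalyticAt ℂ g (γ s + y) := by
    refine isCompact_Icc.eventually_forall_of_forall_eventually fun s hs => ?_
    have hlim : Tendsto (fun z : W × ℝ => γ z.2 + z.1) (𝓝 (0, s)) (𝓝 (γ s)) := by
      have : Continuous fun z : W × ℝ => γ z.2 + z.1 := by fun_prop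
      simpa using this.tendsto (0, s)
    exact hlim.eventually (hg s hs).eventually_analyticAt
  refine hpieces.congr ?_
  filter_upwards [hnear] with y hy
  have hcont : ContinuousOn (fun s => g (γ s + y)) (Set.Icc a b) := fun s hs =>
    (ContinuousAt.comp (f := fun s => γ s + y) (hy s hs).continuousAt
      (by fun_prop)).continuousWithinAt
  rw [intervalIntegral.sum_integral_adjacent_intervals (a := fun k => (t k : ℝ))
    (f := fun s => g (γ s + y)), ht0, hm m le_rfl]
  intro k _
  refine (hcont.mono ?_).intervalIntegrable
  rw [Set.uIcc_of_le (by exact_mod_cast hmono k.le_succ)]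
  exact Set.Icc_subset_Icc (t k).2.1 (t (k + 1)).2.2

end ParameterIntegrals

section GermAlgebra

lemma mkOn_eq_mkOn_iff {F G : (Fin n → ℂ) → ℂ} {hF : AnalyticAt ℂ F 0} {hG : AnalyticAt ℂ G 0} :
    mkOn F hF = mkOn G hG ↔ F =ᶠ[𝓝 0] G := by
  rw [← Filter.Germ.coe_eq]
  exact Subtype.ext_iff

lemma mkOn_rep (g : On n) : mkOn (On.rep g) (On.rep_analyticAt g) = g :=
  Subtype.ext (On.rep_spec g)

lemma exists_eq_mkOn (g : On n) : ∃ F, ∃ hF : AnalyticAt ℂ F 0, g = mkOn F hF :=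
  ⟨_, _, (mkOn_rep g).symm⟩

lemma rep_mkOn (F : (Fin n → ℂ) → ℂ) (hF : AnalyticAt ℂ F 0) :
    On.rep (mkOn F hF) =ᶠ[𝓝 0] F :=
  mkOn_eq_mkOn_iff.1 (mkOn_rep (mkOn F hF))

lemma mkOn_add {F G : (Fin n → ℂ) → ℂ} (hF : AnalyticAt ℂ F 0) (hG : AnalyticAt ℂ G 0) :
    mkOn F hF + mkOn G hG = mkOn (fun x => F x + G x) (hF.add hG) := rfl

lemma mkOn_mul {F G : (Fin n → ℂ) → ℂ} (hF : AnalyticAt ℂ F 0) (hG : AnalyticAt ℂ G 0) :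
    mkOn F hF * mkOn G hG = mkOn (fun x => F x * G x) (hF.mul hG) := rfl

lemma mkOn_sub {F G : (Fin n → ℂ) → ℂ} (hF : AnalyticAt ℂ F 0) (hG : AnalyticAt ℂ G 0) :
    mkOn F hF - mkOn G hG = mkOn (fun x => F x - G x) (hF.sub hG) := rfl

lemma algebraMap_eq_mkOn (c : ℂ) :
    algebraMap ℂ (On n) c = mkOn (fun _ => c) analyticAt_const := rfl

lemma zero_eq_mkOn : (0 : On n) = mkOn (fun _ => 0) analyticAt_const := rfl

lemma one_eq_mkOn : (1 : On n) = mkOn (fun _ => 1) analyticAt_const := rfl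

lemma analyticAt_coord (i : Fin n) (p : Fin n → ℂ) : AnalyticAt ℂ (fun x : Fin n → ℂ => x i) p :=
  (ContinuousLinearMap.proj (R := ℂ) (φ := fun _ : Fin n => ℂ) i).analyticAt p

lemma coordG_eq_mkOn (i : Fin n) :
    coordG i = mkOn (fun x : Fin n → ℂ => x i) (analyticAt_coord i 0) := rfl

/-- The value of a germ at the origin, as an algebra homomorphism. -/
def evalZero : On n →ₐ[ℂ] ℂ where
  __ := Filter.Germ.valueRingHom.comp (On n).val.toRingHom
  commutes' _ := rfl

lemma evalZero_mkOn {F : (Fin n → ℂ) → ℂ} (hF : AnalyticAt ℂ F 0) : evalZero (mkOn F hF) = F 0 :=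
  rfl

lemma ev0_eq_evalZero (g : On n) : ev0 g = evalZero g := by
  conv_rhs => rw [← mkOn_rep g]
  rfl

lemma evalZero_coordG (i : Fin n) : evalZero (coordG i) = 0 := rfl

lemma mem_IX {X : Set (Fin n → ℂ)} {F : (Fin n → ℂ) → ℂ} {hF : AnalyticAt ℂ F 0} :
    mkOn F hF ∈ IX n X ↔ ∀ᶠ x in 𝓝 0, x ∈ X → F x = 0 :=
  Filter.Germ.coe_eq.trans eventually_nhdsWithin_iff

lemma mem_mId_iff {g : On n} : g ∈ mId n ↔ evalZero g = 0 := by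
  obtain ⟨F, hF, rfl⟩ := exists_eq_mkOn g
  exact Filter.Germ.coe_eq.trans (by simp [Filter.EventuallyEq, evalZero_mkOn])

lemma ker_evalZero : RingHom.ker (evalZero (n := n)) = mId n :=
  Ideal.ext fun _ => mem_mId_iff.symm

lemma isUnit_iff_evalZero_ne_zero {g : On n} : IsUnit g ↔ evalZero g ≠ 0 := by
  refine ⟨fun h => (h.map evalZero).ne_zero, fun h => ?_⟩
  obtain ⟨F, hF, rfl⟩ := exists_eq_mkOn g
  rw [evalZero_mkOn] at h
  refine IsUnit.of_mul_eq_one (mkOn (fun x => (F x)⁻¹) (hF.fun_inv h)) ?_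
  rw [mkOn_mul, one_eq_mkOn, mkOn_eq_mkOn_iff]
  filter_upwards [hF.continuousAt.eventually_ne h] with x hx
  exact mul_inv_cancel₀ hx

instance : IsLocalHom (evalZero (n := n)).toRingHom :=
  ⟨fun _ h => isUnit_iff_evalZero_ne_zero.2 h.ne_zero⟩

instance : IsLocalRing (On n) := (evalZero (n := n)).toRingHom.domain_isLocalRing

lemma maximalIdeal_eq_mId : IsLocalRing.maximalIdeal (On n) = mId n := by
  rw [← ker_evalZero]
  exact (IsLocalRing.ker_eq_maximalIdeal (evalZero (n := n)).toRingHom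
    fun c => ⟨algebraMap ℂ _ c, evalZero.commutes c⟩).symm

lemma notMem_mId_iff_isUnit {g : On n} : g ∉ mId n ↔ IsUnit g :=
  mem_mId_iff.not.trans isUnit_iff_evalZero_ne_zero.symm

end GermAlgebra

section PartialDerivatives

lemma analyticAt_partialDeriv (i : Fin n) {F : (Fin n → ℂ) → ℂ} {p : Fin n → ℂ}
    (hF : AnalyticAt ℂ F p) : AnalyticAt ℂ (fun x => fderiv ℂ F x (Pi.single i 1)) p :=
  ((ContinuousLinearMap.apply ℂ ℂ (Pi.single i (1 : ℂ) : Fin n → ℂ)).analyticAt _).comp hF.fderiv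

lemma pd_mkOn (i : Fin n) {F : (Fin n → ℂ) → ℂ} (hF : AnalyticAt ℂ F 0) :
    pd i (mkOn F hF) =
      mkOn (fun x => fderiv ℂ F x (Pi.single i 1)) (analyticAt_partialDeriv i hF) := by
  refine mkOn_eq_mkOn_iff.2 ?_
  filter_upwards [(rep_mkOn F hF).fderiv (𝕜 := ℂ)] with x hx
  rw [hx]

lemma pd_add (i : Fin n) (a b : On n) : pd i (a + b) = pd i a + pd i b := by
  obtain ⟨F, hF, rfl⟩ := exists_eq_mkOn a
  obtain ⟨G, hG, rfl⟩ := exists_eq_mkOn b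
  rw [mkOn_add, pd_mkOn, pd_mkOn, pd_mkOn, mkOn_add, mkOn_eq_mkOn_iff]
  filter_upwards [hF.eventually_analyticAt, hG.eventually_analyticAt] with x hFx hGx
  rw [fderiv_fun_add hFx.differentiableAt hGx.differentiableAt]
  rfl

lemma pd_mul (i : Fin n) (a b : On n) : pd i (a * b) = a * pd i b + b * pd i a := by
  obtain ⟨F, hF, rfl⟩ := exists_eq_mkOn a
  obtain ⟨G, hG, rfl⟩ := exists_eq_mkOn b
  rw [mkOn_mul, pd_mkOn, pd_mkOn, pd_mkOn, mkOn_mul, mkOn_mul, mkOn_add, mkOn_eq_mkOn_iff]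
  filter_upwards [hF.eventually_analyticAt, hG.eventually_analyticAt] with x hFx hGx
  rw [fderiv_fun_mul hFx.differentiableAt hGx.differentiableAt]
  rfl

lemma pd_algebraMap (i : Fin n) (c : ℂ) : pd i (algebraMap ℂ (On n) c) = 0 := by
  rw [algebraMap_eq_mkOn, pd_mkOn, zero_eq_mkOn, mkOn_eq_mkOn_iff]
  exact .of_forall fun x => by simp

/-- The partial derivative `∂/∂xᵢ` as a derivation of `𝒪ₙ`. -/
def pdDerivation (i : Fin n) : Derivation ℂ (On n) (On n) where
  toFun := pd i
  map_add' := pd_add i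
  map_smul' c a := by simp [Algebra.smul_def, pd_mul, pd_algebraMap]
  map_one_eq_zero' := by simpa using pd_algebraMap i (1 : ℂ)
  leibniz' := pd_mul i

lemma pdDerivation_apply (i : Fin n) (g : On n) : pdDerivation i g = pd i g := rfl

lemma pd_coordG (i j : Fin n) : pd i (coordG j) = if i = j then 1 else 0 := by
  rw [coordG_eq_mkOn, pd_mkOn, one_eq_mkOn, zero_eq_mkOn, ← apply_ite (fun c : On n => c)]
  have hderiv (x : Fin n → ℂ) :
      fderiv ℂ (fun x : Fin n → ℂ => x j) x (Pi.single i 1) = if i = j then 1 else 0 := by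
    rw [show fderiv ℂ (fun x : Fin n → ℂ => x j) x = ContinuousLinearMap.proj j from
      (ContinuousLinearMap.proj (R := ℂ) (φ := fun _ : Fin n => ℂ) j).fderiv]
    simp [Pi.single_apply, eq_comm]
  split_ifs with h <;> exact mkOn_eq_mkOn_iff.2 (.of_forall fun x => (hderiv x).trans (by simp [h]))

lemma pd_comm (i j : Fin n) (g : On n) : pd i (pd j g) = pd j (pd i g) := by
  obtain ⟨F, hF, rfl⟩ := exists_eq_mkOn g
  rw [pd_mkOn, pd_mkOn, pd_mkOn, pd_mkOn, mkOn_eq_mkOn_iff]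
  filter_upwards [hF.eventually_analyticAt] with x hFx
  have hsymm : IsSymmSndFDerivAt ℂ F x :=
    ContDiffAt.isSymmSndFDerivAt (n := ⊤) hFx.contDiffAt (by simp)
  have hsnd (v : Fin n → ℂ) :
      fderiv ℂ (fun x => fderiv ℂ F x v) x = (fderiv ℂ (fderiv ℂ F) x).flip v := by
    rw [fderiv_clm_apply hFx.fderiv.differentiableAt (by fun_prop)]
    simp
  rw [hsnd, hsnd]
  exact hsymm _ _

end PartialDerivatives

section Substitution

variable {k : ℕ} {φ : (Fin k → ℂ) → (Fin n → ℂ)}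

lemma analyticAt_comp_of_map_zero (hφ : AnalyticAt ℂ φ 0) (h0 : φ 0 = 0)
    {F : (Fin n → ℂ) → ℂ} (hF : AnalyticAt ℂ F 0) : AnalyticAt ℂ (fun x => F (φ x)) 0 :=
  AnalyticAt.comp (g := F) (by rwa [h0]) hφ

/-- Substitution of `φ : (ℂᵏ, 0) → (ℂⁿ, 0)` into germs of functions. -/
def compOn (hφ : AnalyticAt ℂ φ 0) (h0 : φ 0 = 0) : On n →ₐ[ℂ] On k where
  toFun g := ⟨(g : Filter.Germ (𝓝 (0 : Fin n → ℂ)) ℂ).compTendsto φ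
    (by simpa [ContinuousAt, h0] using hφ.continuousAt), by
      obtain ⟨F, hF, rfl⟩ := exists_eq_mkOn g
      exact ⟨_, analyticAt_comp_of_map_zero hφ h0 hF, rfl⟩⟩
  map_one' := rfl
  map_zero' := rfl
  map_mul' a b := by
    obtain ⟨F, hF, rfl⟩ := exists_eq_mkOn a
    obtain ⟨G, hG, rfl⟩ := exists_eq_mkOn b
    rfl
  map_add' a b := by
    obtain ⟨F, hF, rfl⟩ := exists_eq_mkOn a
    obtain ⟨G, hG, rfl⟩ := exists_eq_mkOn b
    rfl
  commutes' _ := rfl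

lemma compOn_mkOn (hφ : AnalyticAt ℂ φ 0) (h0 : φ 0 = 0) {F : (Fin n → ℂ) → ℂ}
    (hF : AnalyticAt ℂ F 0) :
    compOn hφ h0 (mkOn F hF) = mkOn (fun x => F (φ x)) (analyticAt_comp_of_map_zero hφ h0 hF) :=
  rfl

lemma evalZero_compOn (hφ : AnalyticAt ℂ φ 0) (h0 : φ 0 = 0) (g : On n) :
    evalZero (compOn hφ h0 g) = evalZero g := by
  obtain ⟨F, hF, rfl⟩ := exists_eq_mkOn g
  rw [compOn_mkOn, evalZero_mkOn, evalZero_mkOn, h0]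

end Substitution

section Division

variable {E : Type*} [NormedAddCommGroup E] [NormedSpace ℂ E] {G : E → ℂ} {p : E}

lemma analyticAt_fderiv_apply_affine (ℓ : E →L[ℂ] ℂ) (e : E) (hp : ℓ p = 0)
    (hG : AnalyticAt ℂ G p) (s : ℂ) :
    AnalyticAt ℂ (fun z : E × ℂ => fderiv ℂ G (z.1 - ℓ z.1 • e + (z.2 * ℓ z.1) • e) e) (p, s) := by
  have hpath : AnalyticAt ℂ (fun z : E × ℂ => z.1 - ℓ z.1 • e + (z.2 * ℓ z.1) • e) (p, s) := by
    have hℓ : AnalyticAt ℂ (fun z : E × ℂ => ℓ z.1) (p, s) := (ℓ.analyticAt p).comp analyticAt_fst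
    exact (analyticAt_fst.sub (hℓ.smul analyticAt_const)).add
      ((analyticAt_snd.mul hℓ).smul analyticAt_const)
  have hderiv : AnalyticAt ℂ (fun x => fderiv ℂ G x e) p :=
    ((ContinuousLinearMap.apply ℂ ℂ e).analyticAt _).comp hG.fderiv
  exact AnalyticAt.comp (f := fun z : E × ℂ => z.1 - ℓ z.1 • e + (z.2 * ℓ z.1) • e)
    (by simpa [hp] using hderiv) hpath

lemma sub_eq_mul_intervalIntegral_fderiv {x y e : E} {c : ℂ} (hxy : y = x + c • e)
    (hG : ∀ t ∈ Set.Icc (0 : ℝ) 1, AnalyticAt ℂ G (x + ((t : ℂ) * c) • e)) :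
    G y - G x = c * ∫ t in (0 : ℝ)..1, fderiv ℂ G (x + ((t : ℂ) * c) • e) e := by
  have hline (s : ℂ) : HasDerivAt (fun s : ℂ => x + s • e) e s := by
    simpa using ((hasDerivAt_id s).smul_const e).const_add x
  have hFTC := intervalIntegral.integral_unitInterval_deriv_eq_sub (𝕜 := ℂ) (z₀ := 0) (z₁ := c)
    (f := fun s => G (x + s • e)) (f' := fun s => fderiv ℂ G (x + s • e) e)
    (fun t ht => ContinuousAt.continuousWithinAt ?_) (fun t ht => ?_)
  · simpa [hxy] using hFTC.symm
  · have hcont : ContinuousAt (fun z => fderiv ℂ G z e) (x + ((t : ℂ) * c) • e) :=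
      (hG t ht).fderiv.continuousAt.clm_apply continuousAt_const
    have hpath : Continuous fun t : ℝ => x + (0 + t • c) • e := by fun_prop
    exact ContinuousAt.comp (f := fun t : ℝ => x + (0 + t • c) • e) (by simpa using hcont)
      hpath.continuousAt
  · refine HasFDerivAt.comp_hasDerivAt _ ?_ (hline _)
    simpa using (hG t ht).differentiableAt.hasFDerivAt

lemma exists_analyticAt_sub_eq_mul (ℓ : E →L[ℂ] ℂ) (e : E) (hp : ℓ p = 0)
    (hG : AnalyticAt ℂ G p) :
    ∃ Q : E → ℂ, AnalyticAt ℂ Q p ∧ ∀ᶠ x in 𝓝 p, G x - G (x - ℓ x • e) = ℓ x * Q x := by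
  have hint := analyticAt_intervalIntegral (γ := fun t : ℝ => (p, (t : ℂ))) (by fun_prop)
    (zero_le_one : (0 : ℝ) ≤ 1) fun t _ => analyticAt_fderiv_apply_affine ℓ e hp hG t
  have hshift : AnalyticAt ℂ (fun x : E => ((x - p, 0) : E × ℂ)) p := by fun_prop
  refine ⟨_, AnalyticAt.comp (f := fun x : E => ((x - p, 0) : E × ℂ))
    (by rw [sub_self, Prod.mk_zero_zero]; exact hint) hshift, ?_⟩
  have hseg : ∀ᶠ x in 𝓝 p, ∀ t ∈ Set.Icc (0 : ℝ) 1,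
      AnalyticAt ℂ G (x - ℓ x • e + ((t : ℂ) * ℓ x) • e) := by
    refine isCompact_Icc.eventually_forall_of_forall_eventually fun t _ => ?_
    have hpath : Continuous fun z : E × ℝ => z.1 - ℓ z.1 • e + ((z.2 : ℂ) * ℓ z.1) • e := by
      fun_prop
    refine (hpath.tendsto (p, t)).eventually ?_
    simpa [hp] using hG.eventually_analyticAt
  filter_upwards [hseg] with x hx
  simpa using sub_eq_mul_intervalIntegral_fderiv (y := x) (by simp) hx

end Division

section CoordinateIdeals

/-- The linear map of `ℂⁿ` setting the coordinates in `s` to zero. -/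
def killCoords (s : Finset (Fin n)) : (Fin n → ℂ) →L[ℂ] (Fin n → ℂ) :=
  ContinuousLinearMap.pi fun j => if j ∈ s then 0 else ContinuousLinearMap.proj j

lemma killCoords_apply (s : Finset (Fin n)) (x : Fin n → ℂ) (j : Fin n) :
    killCoords s x j = if j ∈ s then 0 else x j := by
  simp only [killCoords, ContinuousLinearMap.coe_pi']
  split_ifs <;> rfl

/-- Restriction of germs to the coordinate subspace where the coordinates in `s` vanish, followed
by extension to a germ independent of these coordinates. -/
def restrictCoords (s : Finset (Fin n)) : On n →ₐ[ℂ] On n :=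
  compOn ((killCoords s).analyticAt 0) (map_zero _)

/-- The ideal generated by the coordinates in `s`. -/
def coordIdeal (s : Finset (Fin n)) : Ideal (On n) := Ideal.span (coordG '' s)

lemma restrictCoords_mkOn (s : Finset (Fin n)) {G : (Fin n → ℂ) → ℂ} (hG : AnalyticAt ℂ G 0) :
    restrictCoords s (mkOn G hG) = mkOn (fun x => G (killCoords s x))
      (analyticAt_comp_of_map_zero ((killCoords s).analyticAt 0) (map_zero _) hG) := rfl

lemma coordIdeal_insert (s : Finset (Fin n)) (i : Fin n) :
    coordIdeal (insert i s) = Ideal.span {coordG i} ⊔ coordIdeal s := by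
  rw [coordIdeal, coordIdeal, Finset.coe_insert, Set.image_insert_eq, Ideal.span_insert]

lemma restrictCoords_coordG (s : Finset (Fin n)) (i : Fin n) :
    restrictCoords s (coordG i) = if i ∈ s then 0 else coordG i := by
  rw [coordG_eq_mkOn, restrictCoords_mkOn]
  split_ifs with hi
  · rw [zero_eq_mkOn, mkOn_eq_mkOn_iff]
    exact .of_forall fun x => by simp [killCoords_apply, hi]
  · rw [mkOn_eq_mkOn_iff]
    exact .of_forall fun x => by simp [killCoords_apply, hi]

lemma restrictCoords_insert (s : Finset (Fin n)) (i : Fin n) (g : On n) :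
    restrictCoords (insert i s) g = restrictCoords {i} (restrictCoords s g) := by
  obtain ⟨G, hG, rfl⟩ := exists_eq_mkOn g
  rw [restrictCoords_mkOn, restrictCoords_mkOn, restrictCoords_mkOn, mkOn_eq_mkOn_iff]
  refine .of_forall fun x => congrArg G (funext fun j => ?_)
  by_cases hj : j = i <;> simp [killCoords_apply, hj]

lemma sub_restrictCoords_singleton_mem (i : Fin n) (g : On n) :
    g - restrictCoords {i} g ∈ Ideal.span {coordG i} := by
  obtain ⟨G, hG, rfl⟩ := exists_eq_mkOn g
  obtain ⟨Q, hQ, h⟩ := exists_analyticAt_sub_eq_mul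
    (ContinuousLinearMap.proj (R := ℂ) (φ := fun _ : Fin n => ℂ) i) (Pi.single i 1) rfl hG
  refine Ideal.mem_span_singleton'.2 ⟨mkOn Q hQ, ?_⟩
  rw [mul_comm, restrictCoords_mkOn, mkOn_sub, coordG_eq_mkOn, mkOn_mul, mkOn_eq_mkOn_iff]
  filter_upwards [h] with x hx
  have hkill : killCoords {i} x = x - x i • Pi.single i 1 := by
    ext j
    by_cases hj : j = i <;> simp [killCoords_apply, hj]
  rw [hkill]
  exact hx.symm

lemma sub_restrictCoords_mem (s : Finset (Fin n)) (g : On n) :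
    g - restrictCoords s g ∈ coordIdeal s := by
  induction s using Finset.induction_on with
  | empty =>
    have hkill : restrictCoords ∅ g = g := by
      obtain ⟨G, hG, rfl⟩ := exists_eq_mkOn g
      rw [restrictCoords_mkOn, mkOn_eq_mkOn_iff]
      exact .of_forall fun x => congrArg G (by ext; simp [killCoords_apply])
    simp [hkill]
  | insert i s _ ih =>
    rw [restrictCoords_insert, coordIdeal_insert, ← sub_add_sub_cancel g (restrictCoords s g),
      add_comm]
    exact Submodule.add_mem_sup (sub_restrictCoords_singleton_mem i _) ih

lemma restrictCoords_eq_zero_of_mem {s : Finset (Fin n)} {g : On n} (hg : g ∈ coordIdeal s) :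
    restrictCoords s g = 0 := by
  have hle : coordIdeal s ≤ RingHom.ker (restrictCoords s) := by
    rw [coordIdeal, Ideal.span_le]
    rintro _ ⟨i, hi, rfl⟩
    exact (restrictCoords_coordG s i).trans (if_pos hi)
  exact hle hg

lemma eq_zero_of_coordG_mul_eq_zero {i : Fin n} {g : On n} (h : coordG i * g = 0) : g = 0 := by
  obtain ⟨G, hG, rfl⟩ := exists_eq_mkOn g
  rw [coordG_eq_mkOn, mkOn_mul, zero_eq_mkOn, mkOn_eq_mkOn_iff] at h
  rw [zero_eq_mkOn, mkOn_eq_mkOn_iff]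
  filter_upwards [h.eventually_nhds, hG.eventually_analyticAt] with x hx hGx
  have hline : Tendsto (fun s : ℂ => x + s • Pi.single i (1 : ℂ)) (𝓝[≠] 0) (𝓝 x) := by
    have : Continuous fun s : ℂ => x + s • (Pi.single i (1 : ℂ) : Fin n → ℂ) := by fun_prop
    exact (by simpa using this.tendsto 0 : Tendsto _ _ _).mono_left nhdsWithin_le_nhds
  have hne : ∀ᶠ s : ℂ in 𝓝[≠] 0, x i + s ≠ 0 := by
    rcases eq_or_ne (x i) 0 with hxi | hxi
    · simpa [hxi] using eventually_mem_nhdsWithin (a := (0 : ℂ)) (s := {0}ᶜ)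
    · exact eventually_nhdsWithin_of_eventually_nhds
        (ContinuousAt.eventually_ne (by fun_prop) (by simpa using hxi))
  refine tendsto_nhds_unique (hGx.continuousAt.tendsto.comp hline)
    (tendsto_const_nhds.congr' ?_)
  filter_upwards [hline.eventually hx, hne] with s hs hs0
  have hprod : (x i + s) * G (x + s • Pi.single i (1 : ℂ)) = 0 := by simpa using hs
  exact ((mul_eq_zero.1 hprod).resolve_left hs0).symm

lemma mem_coordIdeal_of_coordG_mul_mem {s : Finset (Fin n)} {i : Fin n} (hi : i ∉ s) {g : On n}
    (h : coordG i * g ∈ coordIdeal s) : g ∈ coordIdeal s := by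
  have hprod := restrictCoords_eq_zero_of_mem h
  rw [map_mul, restrictCoords_coordG, if_neg hi] at hprod
  simpa [eq_zero_of_coordG_mul_eq_zero hprod] using sub_restrictCoords_mem s g

lemma coordIdeal_univ : coordIdeal (Finset.univ : Finset (Fin n)) = mId n := by
  refine le_antisymm (Ideal.span_le.2 ?_) fun g hg => ?_
  · rintro _ ⟨i, -, rfl⟩
    exact mem_mId_iff.2 (evalZero_coordG i)
  · have hconst : restrictCoords Finset.univ g = algebraMap ℂ _ (evalZero g) := by
      obtain ⟨G, hG, rfl⟩ := exists_eq_mkOn g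
      rw [restrictCoords_mkOn, algebraMap_eq_mkOn, mkOn_eq_mkOn_iff]
      exact .of_forall fun x => congrArg G (by ext; simp [killCoords_apply])
    simpa [hconst, mem_mId_iff.1 hg] using sub_restrictCoords_mem Finset.univ g

lemma mId_eq_span_coordG : mId n = Ideal.span (Set.range coordG) := by
  rw [← coordIdeal_univ, coordIdeal, Finset.coe_univ, Set.image_univ]

lemma coordG_mem_mId (i : Fin n) : coordG i ∈ mId n := mem_mId_iff.2 (evalZero_coordG i)

end CoordinateIdeals

lemma finite_quotient_pow_succ {K R : Type*} [CommRing K] [CommRing R] [Algebra K R] {I : Ideal R}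
    (hI : I.FG) [Module.Finite K (R ⧸ I)] (N : ℕ) : Module.Finite K (R ⧸ I ^ (N + 1)) := by
  have hker : RingHom.ker (Ideal.Quotient.factorₐ K (Ideal.pow_le_self N.succ_ne_zero : _ ≤ I)) =
      I.map (Ideal.Quotient.mk (I ^ (N + 1))) :=
    Ideal.Quotient.factor_ker (Ideal.pow_le_self N.succ_ne_zero)
  refine Module.finite_of_surjective_of_ker_le_nilradical _
    (Ideal.Quotient.factor_surjective (Ideal.pow_le_self N.succ_ne_zero)) ?_ (hker ▸ hI.map _)
  rw [hker, Ideal.map_le_iff_le_comap]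
  intro a ha
  refine ⟨N + 1, ?_⟩
  rw [← map_pow]
  exact Ideal.Quotient.eq_zero_iff_mem.2 (Ideal.pow_mem_pow ha _)

section MaximalIdealPowers

lemma fg_mId : (mId n).FG :=
  mId_eq_span_coordG (n := n) ▸ Submodule.fg_span (Set.finite_range _)

instance : FiniteDimensional ℂ (On n ⧸ mId n) :=
  .of_surjective (Algebra.linearMap ℂ (On n ⧸ mId n)) fun q => by
    obtain ⟨g, rfl⟩ := Ideal.Quotient.mk_surjective q
    exact ⟨evalZero g, Ideal.Quotient.eq.2 (mem_mId_iff.2 (by simp))⟩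

instance (N : ℕ) : FiniteDimensional ℂ (On n ⧸ mId n ^ (N + 1)) :=
  finite_quotient_pow_succ fg_mId N

lemma exists_mId_pow_le {I : Ideal (On n)} (hI : FiniteDimensional ℂ (On n ⧸ I)) :
    ∃ K, mId n ^ K ≤ I := by
  have : IsArtinianRing (On n ⧸ I) := .of_finite ℂ _
  simpa only [maximalIdeal_eq_mId] using
    IsLocalRing.exists_maximalIdeal_pow_le_of_isArtinianRing_quotient I

lemma pd_mem_mId_pow (i : Fin n) {N : ℕ} {g : On n} (hg : g ∈ mId n ^ (N + 1)) :
    pd i g ∈ mId n ^ N := by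
  induction N generalizing g with
  | zero => simp
  | succ N ih =>
    rw [pow_succ] at hg
    induction hg using Submodule.mul_induction_on' with
    | mem_mul_mem a ha b hb =>
      rw [pd_mul]
      refine Ideal.add_mem _ (Ideal.mul_mem_right _ _ ha) ?_
      rw [pow_succ, mul_comm b]
      exact Ideal.mul_mem_mul (ih ha) hb
    | add a _ b _ ha hb => rw [pd_add]; exact Ideal.add_mem _ ha hb

lemma map_compOn_mId_le {k : ℕ} {φ : (Fin k → ℂ) → (Fin n → ℂ)} (hφ : AnalyticAt ℂ φ 0)
    (h0 : φ 0 = 0) : (mId n).map (compOn hφ h0) ≤ mId k :=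
  Ideal.map_le_iff_le_comap.2 fun g hg =>
    mem_mId_iff.2 ((evalZero_compOn hφ h0 g).trans (mem_mId_iff.1 hg))

lemma mId_one_pow (k : ℕ) : mId 1 ^ k = Ideal.span {(coordG 0 : On 1) ^ k} := by
  rw [mId_eq_span_coordG, Set.range_unique, Ideal.span_singleton_pow]
  rfl

lemma coordG_zero_pow_notMem (k : ℕ) : (coordG 0 : On 1) ^ k ∉ mId 1 ^ (k + 1) := by
  rw [mId_one_pow, Ideal.mem_span_singleton]
  rintro ⟨q, hq⟩
  have hprod : coordG 0 ^ k * (1 - coordG 0 * q) = 0 := by linear_combination hq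
  have hunit : 1 - coordG 0 * q = 0 := by
    clear hq
    induction k with
    | zero => simpa using hprod
    | succ k ih => exact ih (eq_zero_of_coordG_mul_eq_zero (by rw [← hprod, pow_succ', mul_assoc]))
  simpa [evalZero_coordG] using congrArg evalZero hunit

/-- The linear form `∑ⱼ vⱼ xⱼ`, as a germ. -/
def linearForm (v : Fin n → ℂ) : On n := ∑ j, v j • coordG j

lemma linearForm_mem_mId (v : Fin n → ℂ) : linearForm v ∈ mId n :=
  Ideal.sum_mem _ fun j _ => Submodule.smul_of_tower_mem _ _ (coordG_mem_mId j)

lemma compOn_line_coordG (u : Fin n → ℂ) (i : Fin n) :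
    compOn (φ := fun t : Fin 1 → ℂ => t 0 • u) ((analyticAt_coord 0 0).smul analyticAt_const)
      (by simp) (coordG i) = u i • coordG 0 := by
  rw [coordG_eq_mkOn, compOn_mkOn, coordG_eq_mkOn, Algebra.smul_def (u i), algebraMap_eq_mkOn,
    mkOn_mul, mkOn_eq_mkOn_iff]
  exact .of_forall fun x => by simp [mul_comm]

lemma linearForm_pow_notMem {v : Fin n → ℂ} (hv : v ≠ 0) (k : ℕ) :
    linearForm v ^ k ∉ mId n ^ (k + 1) := by
  intro h
  obtain ⟨j, hj⟩ := Function.ne_iff.1 hv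
  let u : Fin n → ℂ := Pi.single j (v j)⁻¹
  have hφ : AnalyticAt ℂ (fun t : Fin 1 → ℂ => t 0 • u) 0 :=
    (analyticAt_coord 0 0).smul analyticAt_const
  have h0 : (0 : Fin 1 → ℂ) 0 • u = 0 := by simp
  have hline : compOn hφ h0 (linearForm v) = coordG 0 := by
    have hdot : ∑ i, v i * u i = 1 := by
      simpa [u, Pi.single_apply] using mul_inv_cancel₀ hj
    simp only [linearForm, map_sum, map_smul, compOn_line_coordG, smul_smul, ← Finset.sum_smul,
      hdot, one_smul]
  refine coordG_zero_pow_notMem k (Ideal.pow_right_mono (map_compOn_mId_le hφ h0) _ ?_)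
  rw [← Ideal.map_pow, ← hline, ← map_pow]
  exact Ideal.mem_map_of_mem _ h

lemma exists_notMem_mId_pow [NeZero n] {f : On n} (hf : FiniteDimensional ℂ (On n ⧸ Jac n f)) :
    ∃ N, f ∉ mId n ^ N := by
  obtain ⟨K, hK⟩ := exists_mId_pow_le hf
  refine ⟨K + 2, fun h => linearForm_pow_notMem (Pi.single_ne_zero_iff.2 one_ne_zero) K
    ((hK.trans ?_) (Ideal.pow_mem_pow (linearForm_mem_mId (Pi.single 0 1)) K))⟩
  rw [Jac, Ideal.span_le]
  rintro _ ⟨i, rfl⟩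
  exact pd_mem_mId_pow i h

end MaximalIdealPowers

section SmoothHypersurface

variable {E : Type*} [NormedAddCommGroup E] [NormedSpace ℂ E] [CompleteSpace E]
  {G H : E → ℂ} {p : E}

/- The chart `Φ x = x - p + (H x - ℓ (x - p)) • e`, with `ℓ = dH(p)` and `ℓ e = 1`, has the
identity as derivative at `p`. -/
lemma exists_chart_of_fderiv_ne_zero (hH : AnalyticAt ℂ H p) (hp : H p = 0)
    (hd : fderiv ℂ H p ≠ 0) :
    ∃ (ℓ : E →L[ℂ] ℂ) (e : E) (Φ Ψ : E → E), ℓ e = 1 ∧ AnalyticAt ℂ Φ p ∧ Φ p = 0 ∧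
      AnalyticAt ℂ Ψ 0 ∧ Ψ 0 = p ∧ (∀ x, ℓ (Φ x) = H x) ∧ (∀ᶠ x in 𝓝 p, Ψ (Φ x) = x) ∧
      ∀ᶠ y in 𝓝 0, Φ (Ψ y) = y := by
  set ℓ := fderiv ℂ H p
  obtain ⟨v, hv⟩ : ∃ v, ℓ v ≠ 0 := by
    by_contra! h
    exact hd (ContinuousLinearMap.ext h)
  set e := (ℓ v)⁻¹ • v
  have he : ℓ e = 1 := by simp [e, hv]
  let Φ : E → E := fun x => x - p + (H x - ℓ (x - p)) • e
  have hΦp : Φ p = 0 := by simp [Φ, hp]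
  have hsub : AnalyticAt ℂ (fun x => x - p) p := analyticAt_id.sub analyticAt_const
  have hΦ : AnalyticAt ℂ Φ p :=
    hsub.add ((hH.sub ((ℓ.analyticAt _).comp hsub)).smul analyticAt_const)
  have hderiv : HasFDerivAt Φ (ContinuousLinearMap.id ℂ E) p := by
    have hsub' : HasFDerivAt (fun x => x - p) (ContinuousLinearMap.id ℂ E) p :=
      (hasFDerivAt_id p).sub_const p
    convert! hsub'.add ((hH.differentiableAt.hasFDerivAt.sub
      (ℓ.hasFDerivAt.comp p hsub')).smul_const e) using 1
    ext x
    simp [ℓ]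
  have hstrict : HasStrictFDerivAt Φ (ContinuousLinearEquiv.refl ℂ E : E →L[ℂ] E) p := by
    have := hΦ.hasStrictFDerivAt
    rwa [hderiv.fderiv] at this
  refine ⟨ℓ, e, Φ, hstrict.localInverse, he, hΦ, hΦp, ?_, ?_, fun x => by simp [Φ, he],
    hstrict.eventually_left_inverse, hΦp ▸ hstrict.eventually_right_inverse⟩
  · have := (hstrict.toOpenPartialHomeomorph Φ).analyticAt_symm'
      (i := ContinuousLinearEquiv.refl ℂ E) hstrict.mem_toOpenPartialHomeomorph_source hΦ
      hderiv.fderiv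
    exact hΦp ▸ this
  · rw [← hΦp, hstrict.localInverse_apply_image]

lemma exists_analyticAt_eq_mul_of_fderiv_ne_zero (hG : AnalyticAt ℂ G p) (hH : AnalyticAt ℂ H p)
    (hp : H p = 0) (hd : fderiv ℂ H p ≠ 0) (hz : ∀ᶠ x in 𝓝 p, H x = 0 → G x = 0) :
    ∃ q, AnalyticAt ℂ q p ∧ ∀ᶠ x in 𝓝 p, G x = H x * q x := by
  obtain ⟨ℓ, e, Φ, Ψ, he, hΦ, hΦp, hΨ, hΨ0, hℓΦ, hΨΦ, hΦΨ⟩ :=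
    exists_chart_of_fderiv_ne_zero hH hp hd
  obtain ⟨Q, hQ, hdiv⟩ := exists_analyticAt_sub_eq_mul ℓ e (map_zero ℓ)
    (AnalyticAt.comp (g := G) (by rwa [hΨ0]) hΨ)
  refine ⟨fun x => Q (Φ x), AnalyticAt.comp (g := Q) (by rwa [hΦp]) hΦ, ?_⟩
  have hproj : Tendsto (fun y => y - ℓ y • e) (𝓝 0) (𝓝 0) := by
    have : Continuous fun y => y - ℓ y • e := by fun_prop
    simpa using this.tendsto 0
  have hΨlim : Tendsto Ψ (𝓝 0) (𝓝 p) := by simpa only [hΨ0] using hΨ.continuousAt.tendsto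
  have hvanish : ∀ᶠ y in 𝓝 0, G (Ψ (y - ℓ y • e)) = 0 := by
    filter_upwards [hproj.eventually hΦΨ, (hΨlim.comp hproj).eventually hz] with y hy hGy
    exact hGy (by rw [Function.comp_apply, ← hℓΦ, hy]; simp [he])
  have hΦlim : Tendsto Φ (𝓝 p) (𝓝 0) := by simpa only [hΦp] using hΦ.continuousAt.tendsto
  filter_upwards [hΦlim.eventually (hdiv.and hvanish), hΨΦ] with x hx hΨx
  rw [← hℓΦ]
  simpa only [Function.comp_apply, hx.2, sub_zero, hΨx] using hx.1

lemma exists_analyticAt_eq_mul (hG : AnalyticAt ℂ G p) (hH : AnalyticAt ℂ H p)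
    (hd : fderiv ℂ H p ≠ 0) (hz : ∀ᶠ x in 𝓝 p, H x = 0 → G x = 0) :
    ∃ q, AnalyticAt ℂ q p ∧ ∀ᶠ x in 𝓝 p, G x = H x * q x := by
  by_cases hp : H p = 0
  · exact exists_analyticAt_eq_mul_of_fderiv_ne_zero hG hH hp hd hz
  · refine ⟨fun x => G x * (H x)⁻¹, hG.mul (hH.fun_inv hp), ?_⟩
    filter_upwards [hH.continuousAt.eventually_ne hp] with x hx
    field_simp

end SmoothHypersurface

section Gluing

variable {E : Type*} [NormedAddCommGroup E] [NormedSpace ℂ E] {G H : E → ℂ}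

lemma eq_of_frequently_ne_zero_of_mul_eq {X : Type*} [TopologicalSpace X] {H a b : X → ℂ} {p : X}
    (hH : ∃ᶠ x in 𝓝 p, H x ≠ 0) (ha : ContinuousAt a p) (hb : ContinuousAt b p)
    (hab : ∀ᶠ x in 𝓝 p, H x * a x = H x * b x) : a p = b p := by
  by_contra hne
  obtain ⟨x, hx, hsub, hx'⟩ :=
    (hH.and_eventually (((ha.sub hb).eventually_ne (sub_ne_zero.2 hne)).and hab)).exists
  exact hsub (sub_eq_zero.2 (mul_left_cancel₀ hx hx'))

lemma exists_analyticOnNhd_eq_mul {U : Set E} (hU : IsOpen U)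
    (hH : ∀ p ∈ U, ∃ᶠ x in 𝓝 p, H x ≠ 0)
    (hloc : ∀ p ∈ U, ∃ q, AnalyticAt ℂ q p ∧ ∀ᶠ x in 𝓝 p, G x = H x * q x) :
    ∃ q, AnalyticOnNhd ℂ q U ∧ ∀ p ∈ U, G p = H p * q p := by
  choose! q hq hGq using hloc
  refine ⟨fun y => q y y, fun p hp => (hq p hp).congr ?_, fun p hp => (hGq p hp).self_of_nhds⟩
  filter_upwards [hU.mem_nhds hp, (hq p hp).eventually_analyticAt, (hGq p hp).eventually_nhds]
    with x hx hqx hGx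
  refine eq_of_frequently_ne_zero_of_mul_eq (hH x hx) hqx.continuousAt (hq x hx).continuousAt ?_
  filter_upwards [hGx, hGq x hx] with y h₁ h₂
  rw [← h₁, ← h₂]

lemma frequently_ne_zero_of_fderiv_ne_zero {p : E} (hd : fderiv ℂ H p ≠ 0) :
    ∃ᶠ x in 𝓝 p, H x ≠ 0 := fun h => hd <| by
  have hzero : H =ᶠ[𝓝 p] fun _ => 0 := h.mono fun _ => not_not.1
  rw [hzero.fderiv_eq]
  simp

end Gluing

section Hartogs

lemma analyticAt_circleIntegral {V W : Type*} [NormedAddCommGroup V] [NormedSpace ℂ V]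
    [NormedAddCommGroup W] [NormedSpace ℂ W] [CompleteSpace W] {g : V × ℂ → W} {p : V} {c : ℂ}
    {r : ℝ} (hr : 0 ≤ r) (hg : ∀ ζ ∈ Metric.sphere c r, AnalyticAt ℂ g (p, ζ)) :
    AnalyticAt ℂ (fun x => ∮ ζ in C(c, r), g (x, ζ)) p := by
  have hint := analyticAt_intervalIntegral
    (g := fun z : V × ℂ => ((z.2 - c) * Complex.I) • g z)
    (γ := fun t : ℝ => (p, circleMap c r t)) (by fun_prop) Real.two_pi_pos.le fun t _ =>
      ((analyticAt_snd.sub analyticAt_const).mul analyticAt_const).smul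
        (hg _ (circleMap_mem_sphere c hr t))
  have hshift : AnalyticAt ℂ (fun x : V => ((x - p, 0) : V × ℂ)) p := by fun_prop
  have hcomp := AnalyticAt.comp (f := fun x : V => ((x - p, 0) : V × ℂ))
    (by rw [sub_self, Prod.mk_zero_zero]; exact hint) hshift
  refine hcomp.congr (.of_forall fun x => ?_)
  simp [circleIntegral, circleMap_sub_center]

lemma analyticAt_fst_coord (i : Fin n) (z : (Fin n → ℂ) × ℂ) :
    AnalyticAt ℂ (fun z : (Fin n → ℂ) × ℂ => z.1 i) z :=
  (analyticAt_coord i z.1).comp analyticAt_fst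

lemma analyticAt_update (i : Fin n) (z : (Fin n → ℂ) × ℂ) :
    AnalyticAt ℂ (fun z : (Fin n → ℂ) × ℂ => Function.update z.1 i z.2) z := by
  refine AnalyticAt.pi fun k => ?_
  by_cases hk : k = i
  · subst hk
    simpa using analyticAt_snd
  · simp only [Function.update_of_ne hk]
    exact analyticAt_fst_coord k z

lemma update_mem_ball {r ρ : ℝ} (hr : r < ρ) {x : Fin n → ℂ} (hx : x ∈ Metric.ball 0 r) (i : Fin n)
    {ζ : ℂ} (hζ : ‖ζ‖ ≤ r) : Function.update x i ζ ∈ Metric.ball 0 ρ := by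
  rw [mem_ball_zero_iff] at hx ⊢
  rw [pi_norm_lt_iff ((norm_nonneg ζ).trans_lt (hζ.trans_lt hr))]
  intro k
  by_cases hk : k = i
  · subst hk
    simpa using hζ.trans_lt hr
  · simpa [Function.update_of_ne hk] using (norm_le_pi_norm x k).trans_lt (hx.trans hr)

/- The extension is the Cauchy integral in the `i`-th coordinate. -/
lemma exists_analyticAt_extension {ρ : ℝ} (hρ : 0 < ρ) {q : (Fin n → ℂ) → ℂ} {i j : Fin n}
    (hij : j ≠ i) (hq : AnalyticOnNhd ℂ q (Metric.ball 0 ρ \ {0})) :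
    ∃ Q, AnalyticAt ℂ Q 0 ∧ ∀ᶠ x in 𝓝 0, x j ≠ 0 → Q x = q x := by
  obtain ⟨r, hr, hrρ⟩ := exists_between hρ
  have hqU {x : Fin n → ℂ} (hx : x ∈ Metric.ball 0 r) {ζ : ℂ} (hζ : ‖ζ‖ ≤ r)
      (hne : Function.update x i ζ ≠ 0) :
      AnalyticAt ℂ (fun z : (Fin n → ℂ) × ℂ => q (Function.update z.1 i z.2)) (x, ζ) :=
    AnalyticAt.comp (g := q) (hq _ ⟨update_mem_ball hrρ hx i hζ, hne⟩) (analyticAt_update i _)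
  refine ⟨fun x => (2 * Real.pi * Complex.I : ℂ)⁻¹ •
      ∮ ζ in C(0, r), (ζ - x i)⁻¹ • q (Function.update x i ζ),
    analyticAt_const.fun_smul (analyticAt_circleIntegral (g := fun z : (Fin n → ℂ) × ℂ =>
      (z.2 - z.1 i)⁻¹ • q (Function.update z.1 i z.2)) hr.le fun ζ hζ => ?_), ?_⟩
  · have hζr : ‖ζ‖ = r := by simpa using hζ
    have hζ0 : ζ ≠ 0 := norm_pos_iff.1 (hζr ▸ hr)
    refine AnalyticAt.smul (AnalyticAt.fun_inv
      (analyticAt_snd.sub (analyticAt_fst_coord i _)) (by simpa using hζ0))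
      (hqU (Metric.mem_ball_self hr) hζr.le fun h => hζ0 ?_)
    simpa using congrFun h i
  · filter_upwards [Metric.ball_mem_nhds 0 hr] with x hx hxj
    have hdiff : DifferentiableOn ℂ (fun ζ => q (Function.update x i ζ))
        (Metric.closedBall 0 r) := fun ζ hζ => by
      have hne : Function.update x i ζ ≠ 0 := fun h => hxj (by
        simpa [Function.update_of_ne hij] using congrFun h j)
      exact ((hqU hx (mem_closedBall_zero_iff.1 hζ) hne).differentiableAt.comp ζ
        ((differentiableAt_const x).prodMk differentiableAt_id)).differentiableWithinAt
    have hxi : x i ∈ Metric.ball (0 : ℂ) r :=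
      mem_ball_zero_iff.2 ((norm_le_pi_norm x i).trans_lt (mem_ball_zero_iff.1 hx))
    rw [hdiff.circleIntegral_sub_inv_smul hxi, Function.update_eq_self, smul_smul,
      inv_mul_cancel₀ Complex.two_pi_I_ne_zero, one_smul]

end Hartogs

section VanishingIdeal

variable {H : (Fin n → ℂ) → ℂ}

lemma Jac_mkOn_le_IX (hH : AnalyticAt ℂ H 0) :
    Jac n (mkOn H hH) ≤ IX n {x | fderiv ℂ H x = 0} := by
  rw [Jac, Ideal.span_le]
  rintro _ ⟨i, rfl⟩
  dsimp only
  rw [pd_mkOn]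
  exact mem_IX.2 (.of_forall fun x (hx : fderiv ℂ H x = 0) => by simp [hx])

lemma eventually_fderiv_ne_zero_of_finite_Jac (hH : AnalyticAt ℂ H 0)
    (hiso : FiniteDimensional ℂ (On n ⧸ Jac n (mkOn H hH))) :
    ∀ᶠ x in 𝓝 (0 : Fin n → ℂ), x ≠ 0 → fderiv ℂ H x ≠ 0 := by
  obtain ⟨K, hK⟩ := exists_mId_pow_le hiso
  have hcoord (k : Fin n) : ∀ᶠ x in 𝓝 (0 : Fin n → ℂ), fderiv ℂ H x = 0 → x k = 0 := by
    have hmem := Jac_mkOn_le_IX hH (hK (Ideal.pow_mem_pow (coordG_mem_mId k) K))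
    have hpow : coordG k ^ K = mkOn (fun x => x k ^ K) ((analyticAt_coord k 0).pow K) := rfl
    filter_upwards [mem_IX.1 (hpow ▸ hmem)] with x hx hd
    exact eq_zero_of_pow_eq_zero (hx hd)
  filter_upwards [eventually_all.2 hcoord] with x hx hx0 hd
  exact hx0 (funext fun k => hx k hd)

lemma IX_preimage_zero_eq_span (hn : 2 ≤ n) (hH : AnalyticAt ℂ H 0)
    (hiso : FiniteDimensional ℂ (On n ⧸ Jac n (mkOn H hH))) :
    IX n (H ⁻¹' {0}) = Ideal.span {mkOn H hH} := by
  refine le_antisymm (fun g hg => ?_) ?_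
  swap
  · exact (Ideal.span_singleton_le_iff_mem _).2 (mem_IX.2 (.of_forall fun x hx => hx))
  obtain ⟨G, hG, rfl⟩ := exists_eq_mkOn g
  obtain ⟨ρ, hρ, hball⟩ := Metric.eventually_nhds_iff_ball.1 ((hG.eventually_analyticAt.and
    hH.eventually_analyticAt).and ((eventually_fderiv_ne_zero_of_finite_Jac hH hiso).and
      (mem_IX.1 hg).eventually_nhds))
  obtain ⟨q, hq, hGq⟩ := exists_analyticOnNhd_eq_mul (G := G) (H := H)
    (U := Metric.ball 0 ρ \ {0}) (Metric.isOpen_ball.sdiff isClosed_singleton)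
    (fun p hp => frequently_ne_zero_of_fderiv_ne_zero ((hball p hp.1).2.1 hp.2))
    fun p ⟨hp, hp0⟩ => exists_analyticAt_eq_mul (hball p hp).1.1 (hball p hp).1.2
      ((hball p hp).2.1 hp0) (hball p hp).2.2
  let i : Fin n := ⟨0, by lia⟩
  let j : Fin n := ⟨1, by lia⟩
  obtain ⟨Q, hQ, hQq⟩ := exists_analyticAt_extension (i := i) (j := j) hρ (by simp [i, j]) hq
  refine Ideal.mem_span_singleton.2 ⟨mkOn Q hQ, sub_eq_zero.1 ?_⟩
  refine eq_zero_of_coordG_mul_eq_zero (i := j) ?_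
  rw [mkOn_mul, mkOn_sub, coordG_eq_mkOn, mkOn_mul, zero_eq_mkOn, mkOn_eq_mkOn_iff]
  filter_upwards [hQq, Metric.ball_mem_nhds 0 hρ] with x hQx hx
  by_cases hxj : x j = 0
  · rw [hxj, zero_mul]
  · have hx0 : x ≠ 0 := fun h => hxj (by rw [h]; rfl)
    rw [hQx hxj, hGq x ⟨hx, hx0⟩, sub_self, mul_zero]

end VanishingIdeal

section Koszul

open CliffordAlgebra (contractLeft contractLeft_ι contractLeft_ι_mul contractLeft_contractLeft)

variable {R M : Type*} [CommRing R] [AddCommGroup M] [Module R M]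

lemma contractLeft_mem_exteriorPower (d : Module.Dual R M) {p : ℕ} {z : ExteriorAlgebra R M}
    (hz : z ∈ ⋀[R]^(p + 1) M) : contractLeft d z ∈ ⋀[R]^p M := by
  induction p generalizing z with
  | zero =>
    obtain ⟨v, rfl⟩ : z ∈ LinearMap.range (ExteriorAlgebra.ι R) := by simpa using hz
    rw [ExteriorAlgebra.ι, contractLeft_ι]
    simp
  | succ p ih =>
    rw [ExteriorAlgebra.exteriorPower, pow_succ'] at hz
    induction hz using Submodule.mul_induction_on' with
    | mem_mul_mem a ha w hw =>
      obtain ⟨v, rfl⟩ := ha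
      rw [ExteriorAlgebra.ι, contractLeft_ι_mul]
      refine sub_mem (Submodule.smul_mem _ _ hw) ?_
      rw [ExteriorAlgebra.exteriorPower, pow_succ']
      exact Submodule.mul_mem_mul ⟨v, rfl⟩ (ih hw)
    | add a _ b _ ha hb => simpa only [map_add] using add_mem ha hb

lemma contractLeft_mem_ideal_smul (d : Module.Dual R M) {J : Ideal R} {p : ℕ}
    {z : ExteriorAlgebra R M} (hz : z ∈ J • ⋀[R]^(p + 1) M) :
    contractLeft d z ∈ J • ⋀[R]^p M := by
  have hmap : Submodule.map (contractLeft d) (⋀[R]^(p + 1) M) ≤ ⋀[R]^p M :=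
    Submodule.map_le_iff_le_comap.2 fun z hz => contractLeft_mem_exteriorPower d hz
  have hdz := Submodule.mem_map_of_mem (f := contractLeft d) hz
  rw [Submodule.map_smul''] at hdz
  exact Submodule.smul_mono le_rfl hmap hdz

lemma ι_mul_mem_exteriorPower (e : M) {p : ℕ} {z : ExteriorAlgebra R M} (hz : z ∈ ⋀[R]^p M) :
    ExteriorAlgebra.ι R e * z ∈ ⋀[R]^(p + 1) M := by
  rw [ExteriorAlgebra.exteriorPower, pow_succ']
  exact Submodule.mul_mem_mul ⟨e, rfl⟩ hz

lemma ι_mul_mem_ideal_smul (e : M) {J : Ideal R} {p : ℕ} {z : ExteriorAlgebra R M}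
    (hz : z ∈ J • ⋀[R]^p M) : ExteriorAlgebra.ι R e * z ∈ J • ⋀[R]^(p + 1) M := by
  have hmap : Submodule.map (LinearMap.mulLeft R (ExteriorAlgebra.ι R e)) (⋀[R]^p M) ≤
      ⋀[R]^(p + 1) M :=
    Submodule.map_le_iff_le_comap.2 fun z hz => ι_mul_mem_exteriorPower e hz
  have hez := Submodule.mem_map_of_mem (f := LinearMap.mulLeft R (ExteriorAlgebra.ι R e)) hz
  rw [Submodule.map_smul''] at hez
  exact Submodule.smul_mono le_rfl hmap hez

lemma exteriorPower_eq_bot_of_finrank_lt [Nontrivial R] [Module.Free R M] [Module.Finite R M]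
    {p : ℕ} (hp : Module.finrank R M < p) : ⋀[R]^p M = ⊥ := by
  have : Module.finrank R (⋀[R]^p M) = 0 := by
    rw [exteriorPower.finrank_eq, Nat.choose_eq_zero_of_lt hp]
  exact (Submodule.subsingleton_iff_eq_bot).1 (Module.finrank_eq_zero_iff_of_free R _ |>.1 this)

lemma mem_ideal_smul_top_of_smul_mem [Module.Free R M] {J : Ideal R} {a : R}
    (ha : ∀ g, a * g ∈ J → g ∈ J) {w : M} (hw : a • w ∈ J • (⊤ : Submodule R M)) :
    w ∈ J • (⊤ : Submodule R M) := by
  let b := Module.Free.chooseBasis R M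
  rw [← b.span_eq, Submodule.mem_ideal_smul_span_iff_exists_sum] at hw ⊢
  obtain ⟨c, hc, hcw⟩ := hw
  refine ⟨b.repr w, fun i => ha _ ?_, b.linearCombination_repr w⟩
  have hrepr : b.repr (a • w) = c := by
    rw [← hcw, ← Finsupp.linearCombination_apply, b.repr_linearCombination]
  simpa [← hrepr] using hc i

lemma mem_ideal_smul_of_smul_mem {N : Submodule R M} [Module.Free R N] {J : Ideal R} {a : R}
    (ha : ∀ g, a * g ∈ J → g ∈ J) {w : M} (hw : w ∈ N) (haw : a • w ∈ J • N) : w ∈ J • N :=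
  (Submodule.mem_smul_top_iff J N ⟨w, hw⟩).1 <| mem_ideal_smul_top_of_smul_mem ha <|
    (Submodule.mem_smul_top_iff J N (a • ⟨w, hw⟩)).2 haw

/-- The elements of degree `p + 1` of the Koszul complex of `d : M → R` that are boundaries
modulo the ideal `J`. The Koszul differential is contraction with `d` on the exterior algebra. -/
def koszulBoundaries (d : Module.Dual R M) (J : Ideal R) (p : ℕ) :
    Submodule R (ExteriorAlgebra R M) :=
  (⋀[R]^(p + 2) M).map (contractLeft d) ⊔ J • ⋀[R]^(p + 1) M

-- Wedging with `e` is a homotopy between multiplication by `d e` and `0`.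
lemma smul_mem_koszulBoundaries (d : Module.Dual R M) (e : M) {J : Ideal R} {p : ℕ}
    {z : ExteriorAlgebra R M} (hz : z ∈ ⋀[R]^(p + 1) M) (hdz : contractLeft d z ∈ J • ⋀[R]^p M) :
    d e • z ∈ koszulBoundaries d J p := by
  have hsplit : d e • z =
      contractLeft d (ExteriorAlgebra.ι R e * z) + ExteriorAlgebra.ι R e * contractLeft d z := by
    rw [ExteriorAlgebra.ι, contractLeft_ι_mul, sub_add_cancel]
  rw [hsplit]
  exact Submodule.add_mem_sup (Submodule.mem_map_of_mem (ι_mul_mem_exteriorPower e hz))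
    (ι_mul_mem_ideal_smul e hdz)

lemma mem_koszulBoundaries_of_smul_mem [Module.Free R M] {d : Module.Dual R M} {J : Ideal R}
    {a : R} (ha : ∀ g, a * g ∈ J → g ∈ J) {p : ℕ}
    (ih : ∀ ω ∈ ⋀[R]^(p + 2) M, contractLeft d ω ∈ (Ideal.span {a} ⊔ J) • ⋀[R]^(p + 1) M →
      ω ∈ koszulBoundaries d (Ideal.span {a} ⊔ J) (p + 1))
    {z : ExteriorAlgebra R M} (hz : z ∈ ⋀[R]^(p + 1) M) (haz : a • z ∈ koszulBoundaries d J p) :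
    z ∈ koszulBoundaries d J p := by
  obtain ⟨_, ⟨ω, hω, rfl⟩, j, hj, haz⟩ := Submodule.mem_sup.1 haz
  have hdω : contractLeft d ω ∈ (Ideal.span {a} ⊔ J) • ⋀[R]^(p + 1) M := by
    rw [eq_sub_of_add_eq haz, Submodule.sup_smul]
    exact sub_mem (Submodule.mem_sup_left
      (Submodule.smul_mem_smul (Ideal.mem_span_singleton_self a) hz)) (Submodule.mem_sup_right hj)
  have hω' := ih ω hω hdω
  rw [koszulBoundaries, Submodule.sup_smul, Submodule.ideal_span_singleton_smul] at hω'
  obtain ⟨_, ⟨η, -, rfl⟩, _, hr, rfl⟩ := Submodule.mem_sup.1 hω'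
  obtain ⟨_, ⟨u, hu, rfl⟩, j', hj', rfl⟩ := Submodule.mem_sup.1 hr
  have hdu : contractLeft d u ∈ (⋀[R]^(p + 2) M).map (contractLeft d) :=
    Submodule.mem_map_of_mem hu
  have hdiff : a • (z - contractLeft d u) = contractLeft d j' + j := by
    rw [smul_sub, ← haz]
    simp only [map_add, map_smul, contractLeft_contractLeft, zero_add,
      DistribSMul.toLinearMap_apply]
    abel
  have hzu : z - contractLeft d u ∈ J • ⋀[R]^(p + 1) M := by
    refine mem_ideal_smul_of_smul_mem ha (sub_mem hz (contractLeft_mem_exteriorPower d hu)) ?_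
    exact hdiff ▸ add_mem (contractLeft_mem_ideal_smul d hj') hj
  simpa [koszulBoundaries] using Submodule.add_mem_sup hdu hzu

lemma mem_koszulBoundaries_of_pow_smul_mem [Module.Free R M] {d : Module.Dual R M} {J : Ideal R}
    {a : R} (ha : ∀ g, a * g ∈ J → g ∈ J) {p : ℕ}
    (ih : ∀ ω ∈ ⋀[R]^(p + 2) M, contractLeft d ω ∈ (Ideal.span {a} ⊔ J) • ⋀[R]^(p + 1) M →
      ω ∈ koszulBoundaries d (Ideal.span {a} ⊔ J) (p + 1))
    {z : ExteriorAlgebra R M} (hz : z ∈ ⋀[R]^(p + 1) M) (k : ℕ)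
    (haz : a ^ k • z ∈ koszulBoundaries d J p) : z ∈ koszulBoundaries d J p := by
  induction k with
  | zero => simpa using haz
  | succ k ihk =>
    rw [pow_succ', mul_smul] at haz
    exact ihk (mem_koszulBoundaries_of_smul_mem ha ih (Submodule.smul_mem _ _ hz) haz)

variable {ι : Type*} [Fintype ι] [Nontrivial R] [Module.Free R M] [Module.Finite R M]

theorem mem_koszulBoundaries {x : ι → R}
    (hreg : ∀ (s : Finset ι), ∀ i ∉ s, ∀ g,
      x i * g ∈ Ideal.span (x '' s) → g ∈ Ideal.span (x '' s))
    (hrank : Module.finrank R M ≤ Fintype.card ι) {d : Module.Dual R M}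
    (hd : ∀ i, ∃ k, x i ^ k ∈ LinearMap.range d) (s : Finset ι) {p : ℕ} (hp : s.card ≤ p)
    {z : ExteriorAlgebra R M} (hz : z ∈ ⋀[R]^(p + 1) M)
    (hdz : contractLeft d z ∈ Ideal.span (x '' s) • ⋀[R]^p M) :
    z ∈ koszulBoundaries d (Ideal.span (x '' s)) p := by
  classical
  induction hk : sᶜ.card generalizing s p z with
  | zero =>
    have hs : s = Finset.univ := by simpa using hk
    have hbot : ⋀[R]^(p + 1) M = ⊥ := by
      refine exteriorPower_eq_bot_of_finrank_lt (Nat.lt_succ_of_le (hrank.trans ?_))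
      rwa [hs] at hp
    rw [hbot, Submodule.mem_bot] at hz
    exact hz ▸ zero_mem _
  | succ k ih =>
    obtain ⟨i, hi⟩ := Finset.card_pos.1 (k.succ_pos.trans_eq hk.symm)
    have his : i ∉ s := Finset.mem_compl.1 hi
    obtain ⟨K, e, he⟩ := hd i
    refine mem_koszulBoundaries_of_pow_smul_mem (hreg s i his) (fun ω hω hdω => ?_) hz K
      (he ▸ smul_mem_koszulBoundaries d e hz hdz)
    have hinsert :
        Ideal.span {x i} ⊔ Ideal.span (x '' s) = Ideal.span (x '' (insert i s : Finset ι)) := by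
      rw [Finset.coe_insert, Set.image_insert_eq, Ideal.span_insert]
    rw [hinsert] at hdω ⊢
    refine ih (insert i s) (by rw [Finset.card_insert_of_notMem his]; lia) hω hdω ?_
    rw [Finset.compl_insert, Finset.card_erase_of_mem hi, hk, Nat.add_sub_cancel]

/-- Vanishing of the first Koszul homology. -/
theorem ker_le_span_koszul {x : ι → R}
    (hreg : ∀ (s : Finset ι), ∀ i ∉ s, ∀ g,
      x i * g ∈ Ideal.span (x '' s) → g ∈ Ideal.span (x '' s))
    (hrank : Module.finrank R M ≤ Fintype.card ι) {d : Module.Dual R M}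
    (hd : ∀ i, ∃ k, x i ^ k ∈ LinearMap.range d) :
    LinearMap.ker d ≤ Submodule.span R (Set.range fun p : M × M => d p.1 • p.2 - d p.2 • p.1) := by
  intro κ hκ
  have hz : ExteriorAlgebra.ι R κ ∈ ⋀[R]^(0 + 1) M := by simp
  have hmem := mem_koszulBoundaries hreg hrank hd ∅ le_rfl hz
    (by rw [ExteriorAlgebra.ι, contractLeft_ι, LinearMap.mem_ker.1 hκ]; simp)
  obtain ⟨ω, hω, hdω⟩ : ExteriorAlgebra.ι R κ ∈ (⋀[R]^2 M).map (contractLeft d) := by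
    simpa [koszulBoundaries] using hmem
  rw [← ExteriorAlgebra.ι_leftInverse (R := R) κ, ← hdω]
  clear hdω
  rw [SetLike.mem_coe, ExteriorAlgebra.exteriorPower, pow_two] at hω
  induction hω using Submodule.mul_induction_on' with
  | mem_mul_mem a ha w hw =>
    obtain ⟨v, rfl⟩ := ha
    obtain ⟨w, rfl⟩ := hw
    refine Submodule.subset_span ⟨(v, w), ?_⟩
    simp only [ExteriorAlgebra.ι, contractLeft_ι_mul, contractLeft_ι, map_sub, map_smul,
      ← Algebra.commutes, ← Algebra.smul_def]
    exact (congrArg₂ _ (congrArg _ (ExteriorAlgebra.ι_leftInverse w))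
      (congrArg _ (ExteriorAlgebra.ι_leftInverse v))).symm
  | add a _ b _ ha hb => simpa only [map_add] using add_mem ha hb

end Koszul

section HamiltonianFields

lemma mem_range_gradMap {f g : On n} : g ∈ LinearMap.range (gradMap n f) ↔ g ∈ Jac n f := by
  rw [Jac, Ideal.mem_span_range_iff_exists_fun]
  rfl

lemma gradMap_single (i : Fin n) (c f : On n) : gradMap n f (Pi.single i c) = c * pd i f := by
  simp [gradMap, applyVF, Pi.single_apply]

lemma Jmin_le_map_HamF (f h : On n) : Jmin n f h ≤ (HamF n h).map (gradMap n f) := by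
  refine Ideal.span_le.2 ?_
  rintro _ ⟨⟨i, j⟩, rfl⟩
  refine ⟨Pi.single i (pd j h) - Pi.single j (pd i h), ?_, ?_⟩
  · rw [SetLike.mem_coe, HamF, LinearMap.mem_ker, map_sub, gradMap_single, gradMap_single]
    ring
  · rw [map_sub, gradMap_single, gradMap_single]
    ring

lemma gradMap_koszul_mem_Jmin (f h : On n) (a b : Fin n → On n) :
    gradMap n f (gradMap n h a • b - gradMap n h b • a) ∈ Jmin n f h := by
  have hexpand : gradMap n f (gradMap n h a • b - gradMap n h b • a) =
      ∑ i, ∑ j, a j * b i * (pd i f * pd j h - pd j f * pd i h) := by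
    rw [map_sub, map_smul, map_smul, smul_eq_mul, smul_eq_mul, mul_comm,
      mul_comm (gradMap n h b)]
    change (∑ i, b i * pd i f) * (∑ j, a j * pd j h) -
      (∑ i, a i * pd i f) * (∑ j, b j * pd j h) = _
    rw [Finset.sum_mul_sum, Finset.sum_mul_sum, Finset.sum_comm (γ := Fin n) (f := fun i j =>
      a i * pd i f * (b j * pd j h)), ← Finset.sum_sub_distrib]
    refine Finset.sum_congr rfl fun i _ => ?_
    rw [← Finset.sum_sub_distrib]
    exact Finset.sum_congr rfl fun j _ => by ring
  rw [hexpand]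
  exact sum_mem fun i _ => sum_mem fun j _ =>
    Ideal.mul_mem_left _ _ (Ideal.subset_span ⟨(i, j), rfl⟩)

theorem map_HamF_eq_Jmin (f : On n) {h : On n} (hh : FiniteDimensional ℂ (On n ⧸ Jac n h)) :
    (HamF n h).map (gradMap n f) = Jmin n f h := by
  refine le_antisymm ?_ (Jmin_le_map_HamF f h)
  obtain ⟨K, hK⟩ := exists_mId_pow_le hh
  have hreg : ∀ (s : Finset (Fin n)), ∀ i ∉ s, ∀ g, coordG i * g ∈ Ideal.span (coordG '' s) →
      g ∈ Ideal.span (coordG '' s) := fun s i hi g hg => mem_coordIdeal_of_coordG_mul_mem hi hg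
  have hpow : ∀ i, ∃ k, coordG i ^ k ∈ LinearMap.range (gradMap n h) :=
    fun i => ⟨K, mem_range_gradMap.2 (hK (Ideal.pow_mem_pow (coordG_mem_mId i) K))⟩
  have hrank : Module.finrank (On n) (Fin n → On n) ≤ Fintype.card (Fin n) := by simp
  have hker := ker_le_span_koszul hreg hrank hpow
  rw [Submodule.map_le_iff_le_comap, HamF]
  refine hker.trans ?_
  rw [Submodule.span_le]
  rintro _ ⟨⟨a, b⟩, rfl⟩
  exact gradMap_koszul_mem_Jmin f h a b

end HamiltonianFields

section Weights

open Module.End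
open scoped Pointwise

lemma apply_linearCombination_sub {K V ι : Type*} [CommRing K] [AddCommGroup V] [Module K V]
    [Fintype ι] (T : V →ₗ[K] V) (v : ι → V) (C : Matrix ι ι K) (c : ι → K) :
    T (Fintype.linearCombination K v c) -
        Fintype.linearCombination K v (C.transpose.mulVec c) =
      ∑ i, c i • (T (v i) - ∑ j, C i j • v j) := by
  simp only [Fintype.linearCombination_apply, map_sum, map_smul, smul_sub,
    Finset.sum_sub_distrib, Matrix.mulVec, dotProduct, Matrix.transpose_apply,
    Finset.smul_sum, Finset.sum_smul, smul_smul, mul_comm (c _)]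
  rw [Finset.sum_comm (f := fun i j => (C j i * c j) • v i)]

lemma spectrum_transpose {K ι : Type*} [CommRing K] [Fintype ι] [DecidableEq ι]
    (C : Matrix ι ι K) : spectrum K C.transpose = spectrum K C := by
  ext l
  rw [spectrum.mem_iff, spectrum.mem_iff, ← Matrix.isUnit_transpose, Matrix.transpose_sub,
    Matrix.transpose_transpose, Matrix.algebraMap_eq_diagonal, Matrix.diagonal_transpose]

section EigenspacesOfEndomorphisms

variable {K U V : Type*} [Field K] [AddCommGroup U] [Module K U] [AddCommGroup V] [Module K V]

lemma map_mem_maxGenEigenspace {T : Module.End K U} {D : Module.End K V} {φ : U →ₗ[K] V}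
    (hφ : ∀ u, φ (T u) = D (φ u)) {l : K} {u : U} (hu : u ∈ T.maxGenEigenspace l) :
    φ u ∈ D.maxGenEigenspace l := by
  rw [mem_maxGenEigenspace] at hu ⊢
  have hpow : ∀ (k : ℕ) u, φ (((T - l • 1) ^ k) u) = ((D - l • 1) ^ k) (φ u) := by
    intro k
    induction k with
    | zero => simp
    | succ k ih => simp [pow_succ', ih, hφ]
  exact hu.imp fun k hk => by rw [← hpow, hk, map_zero]

lemma maxGenEigenspace_eq_bot [FiniteDimensional K U] {C : Module.End K U} {l : K}
    (hl : l ∉ spectrum K C) : C.maxGenEigenspace l = ⊥ := by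
  by_contra h
  exact hl (HasEigenvalue.mem_spectrum (HasUnifEigenvalue.lt zero_lt_one h))

-- `U × A` carries a block triangular operator that `(u, a) ↦ e u + a` intertwines with `D`.
lemma range_le_sup_iSup_maxGenEigenspace [IsAlgClosed K] [FiniteDimensional K U]
    {D : Module.End K V} {A : Submodule K V} [FiniteDimensional K A] (hA : ∀ a ∈ A, D a ∈ A)
    (C : Module.End K U) (e : U →ₗ[K] V) (hC : ∀ u, D (e u) - e (C u) ∈ A) :
    LinearMap.range e ≤ A ⊔ ⨆ l ∈ spectrum K C, D.maxGenEigenspace l := by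
  let c : U →ₗ[K] A := (D ∘ₗ e - e ∘ₗ C).codRestrict A hC
  let T : Module.End K (U × A) := (C ∘ₗ LinearMap.fst K U A).prod (c.coprod (D.restrict hA))
  let φ : U × A →ₗ[K] V := e.coprod A.subtype
  have hφ : ∀ u, φ (T u) = D (φ u) := fun u => by simp [φ, T, c]; abel
  have hfst : ∀ u, LinearMap.fst K U A (T u) = C (LinearMap.fst K U A u) := fun _ => rfl
  have hspace : ∀ l, (T.maxGenEigenspace l).map φ ≤
      A ⊔ ⨆ l ∈ spectrum K C, D.maxGenEigenspace l := by
    rintro l _ ⟨u, hu, rfl⟩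
    by_cases hl : l ∈ spectrum K C
    · exact Submodule.mem_sup_right
        (le_biSup D.maxGenEigenspace hl (map_mem_maxGenEigenspace hφ hu))
    · have hu0 := map_mem_maxGenEigenspace hfst hu
      rw [maxGenEigenspace_eq_bot hl, Submodule.mem_bot, LinearMap.fst_apply] at hu0
      exact Submodule.mem_sup_left (by simp [φ, hu0])
  calc LinearMap.range e ≤ (⨆ l, T.maxGenEigenspace l).map φ := by
        rw [iSup_maxGenEigenspace_eq_top]
        rintro _ ⟨u, rfl⟩
        exact ⟨(u, 0), trivial, by simp [φ]⟩
    _ ≤ _ := by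
        rw [Submodule.map_iSup]
        exact iSup_le hspace

end EigenspacesOfEndomorphisms

variable {K R : Type*} [Field K] [CommRing R] [Algebra K R] {D : Derivation K R R}

lemma mul_mem_maxGenEigenspace {a b : R} {l l' : K}
    (ha : a ∈ maxGenEigenspace (D : R →ₗ[K] R) l) (hb : b ∈ maxGenEigenspace (D : R →ₗ[K] R) l') :
    a * b ∈ maxGenEigenspace (D : R →ₗ[K] R) (l + l') := by
  set T : Module.End K R := (D : R →ₗ[K] R)
  have hleibniz : ∀ a b, (T - (l + l') • 1) (a * b) =
      (T - l • 1) a * b + a * (T - l' • 1) b := by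
    intro a b
    simp only [T, LinearMap.sub_apply, LinearMap.add_apply, LinearMap.smul_apply,
      Module.End.one_apply, Derivation.coeFn_coe, Derivation.leibniz, smul_eq_mul, add_smul,
      sub_mul, mul_sub, smul_mul_assoc, mul_smul_comm, mul_comm b]
    abel
  have hvanish : ∀ (s k k' : ℕ) a b, k + k' ≤ s → ((T - l • 1) ^ k) a = 0 →
      ((T - l' • 1) ^ k') b = 0 → ((T - (l + l') • 1) ^ s) (a * b) = 0 := by
    intro s
    induction s with
    | zero =>
      intro k k' a b hs hk _
      obtain rfl : k = 0 := by omega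
      simp_all
    | succ s ih =>
      rintro (_ | k) (_ | k') a b hs hk hk'
      iterate 3 simp_all
      rw [pow_succ, Module.End.mul_apply, hleibniz, map_add,
        ih k (k' + 1) _ b (by omega) (by rwa [pow_succ] at hk) hk',
        ih (k + 1) k' a _ (by omega) hk (by rwa [pow_succ] at hk'), add_zero]
  rw [mem_maxGenEigenspace] at ha hb ⊢
  obtain ⟨k, hk⟩ := ha
  obtain ⟨k', hk'⟩ := hb
  exact ⟨k + k', hvanish _ k k' a b le_rfl hk hk'⟩

/-- The weights of the derivation `D` on `A / A'` lie in `S`: modulo `A'`, the ideal `A` is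
contained in the sum of the generalized eigenspaces of `D` for the eigenvalues in `S`. -/
def HasWeightsIn (D : Derivation K R R) (A A' : Ideal R) (S : Set K) : Prop :=
  A.restrictScalars K ≤ A'.restrictScalars K ⊔
    ⨆ l ∈ S, maxGenEigenspace (D : R →ₗ[K] R) l

namespace HasWeightsIn

variable {A A' A'' B B' : Ideal R} {S S' : Set K}

lemma mono (h : HasWeightsIn D A A' S) (hS : S ⊆ S') : HasWeightsIn D A A' S' :=
  h.trans (sup_le_sup_left (biSup_mono hS) _)

lemma trans (h : HasWeightsIn D A A' S) (h' : HasWeightsIn D A' A'' S') :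
    HasWeightsIn D A A'' (S ∪ S') := by
  refine le_trans h (sup_le (h'.mono Set.subset_union_right) ?_)
  exact le_sup_of_le_right (biSup_mono Set.subset_union_left)

lemma exists_add_eq (h : HasWeightsIn D A A' S) (hA : A' ≤ A) {a : R} (ha : a ∈ A) :
    ∃ a' ∈ A', ∃ v ∈ A, v ∈ ⨆ l ∈ S, maxGenEigenspace (D : R →ₗ[K] R) l ∧ a' + v = a := by
  obtain ⟨a', ha', v, hv, hsum⟩ := Submodule.mem_sup.1 (h ha)
  refine ⟨a', ha', v, ?_, hv, hsum⟩
  rw [← sub_eq_of_eq_add' hsum.symm]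
  exact A.sub_mem ha (hA ha')

lemma mul (h : HasWeightsIn D A A' S) (h' : HasWeightsIn D B B' S') (hA : A' ≤ A)
    (hB : B' ≤ B) : HasWeightsIn D (A * B) (A' * B ⊔ A * B') (S + S') := by
  rw [HasWeightsIn, Ideal.restrictScalars_mul, Submodule.mul_le]
  intro a ha b hb
  obtain ⟨a', ha', v, hvA, hv, rfl⟩ := h.exists_add_eq hA ha
  obtain ⟨b', hb', v', -, hv', rfl⟩ := h'.exists_add_eq hB hb
  have hexpand : (a' + v) * (b' + v') = (a' * (b' + v') + v * b') + v * v' := by ring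
  rw [hexpand]
  refine Submodule.add_mem_sup (add_mem (Ideal.mem_sup_left (Ideal.mul_mem_mul ha' hb))
    (Ideal.mem_sup_right (Ideal.mul_mem_mul hvA hb'))) ?_
  refine SetLike.le_def.1 ?_ (Submodule.mul_mem_mul hv hv')
  simp only [Submodule.iSup_mul, Submodule.mul_iSup]
  refine iSup₂_le fun l' hl' => iSup₂_le fun l hl => ?_
  exact le_trans (Submodule.mul_le.2 fun a ha b hb => mul_mem_maxGenEigenspace ha hb)
    (le_biSup _ (Set.add_mem_add hl hl'))

lemma eq_zero_of_notMem (h : HasWeightsIn D A ⊥ S) {a : R} (ha : a ∈ A) {l : K} (hl : l ∉ S)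
    (hDa : D a = l • a) : a = 0 := by
  have haS : a ∈ ⨆ l ∈ S, maxGenEigenspace (D : R →ₗ[K] R) l := by
    simpa using h ha
  have hal : a ∈ maxGenEigenspace (D : R →ₗ[K] R) l :=
    eigenspace_le_maxGenEigenspace (mem_eigenspace_iff.2 hDa)
  exact Submodule.disjoint_def.1
    ((independent_maxGenEigenspace (D : R →ₗ[K] R)).disjoint_biSup hl) a hal haS

lemma map_of_generators [IsAlgClosed K] {R' : Type*} [CommRing R'] [Algebra K R']
    [FiniteDimensional K R'] {D' : Derivation K R' R'} {π : R →ₐ[K] R'}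
    (hπ : Function.Surjective π) (hD : ∀ r, D' (π r) = π (D r)) (hA' : ∀ a ∈ A', D a ∈ A')
    {ι : Type*} [Fintype ι] [DecidableEq ι] (v : ι → R) (C : Matrix ι ι K)
    (hC : ∀ i, D (v i) - ∑ j, C i j • v j ∈ A')
    (hA : A.restrictScalars K ≤ A'.restrictScalars K ⊔ Submodule.span K (Set.range v)) :
    HasWeightsIn D' (A.map π) (A'.map π) (spectrum K C) := by
  let e := π.toLinearMap ∘ₗ Fintype.linearCombination K v
  have hstable : ∀ a ∈ A'.map π, D' a ∈ A'.map π := by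
    intro a ha
    obtain ⟨r, hr, rfl⟩ := (Ideal.mem_map_iff_of_surjective π hπ).1 ha
    exact hD r ▸ Ideal.mem_map_of_mem π (hA' r hr)
  have he : ∀ c, D' (e c) - e (Matrix.toLin' C.transpose c) ∈ A'.map π := by
    intro c
    have hsum : D' (e c) - e (Matrix.toLin' C.transpose c) =
        π (∑ i, c i • (D (v i) - ∑ j, C i j • v j)) := by
      have happly := congrArg π (apply_linearCombination_sub (D : R →ₗ[K] R) v C c)
      rw [map_sub] at happly
      exact (congrArg (· - _) (hD _)).trans happly
    rw [hsum]
    exact Ideal.mem_map_of_mem π (Ideal.sum_mem _ fun i _ =>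
      Submodule.smul_of_tower_mem _ _ (hC i))
  rw [← spectrum_transpose, ← Matrix.spectrum_toLin']
  refine le_trans ?_ (sup_le le_sup_left (range_le_sup_iSup_maxGenEigenspace
    (A := (A'.map π).restrictScalars K) (D := (D' : R' →ₗ[K] R')) hstable _ e he))
  intro a ha
  obtain ⟨r, hr, rfl⟩ := (Ideal.mem_map_iff_of_surjective π hπ).1 ha
  obtain ⟨r', hr', s, hs, rfl⟩ := Submodule.mem_sup.1 (hA hr)
  rw [← Fintype.range_linearCombination] at hs
  obtain ⟨c, rfl⟩ := hs
  rw [map_add]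
  exact Submodule.add_mem_sup (Ideal.mem_map_of_mem π hr') ⟨c, rfl⟩

end HasWeightsIn

section RealPart

variable {R : Type*} [CommRing R] [Algebra ℂ R] {D : Derivation ℂ R R} {m I : Ideal R} {M : ℝ}

lemma HasWeightsIn.pow (hm : HasWeightsIn D m (m ^ 2) {z | z.re ≤ M}) (a : ℕ) :
    HasWeightsIn D (m ^ (a + 1)) (m ^ (a + 2)) {z | z.re ≤ (a + 1) * M} := by
  induction a with
  | zero => simpa using hm
  | succ a ih =>
    have hprod := ih.mul hm (Ideal.pow_le_pow_right (Nat.le_succ _))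
      (Ideal.pow_le_self two_ne_zero)
    rw [← pow_succ, ← pow_succ, ← pow_add, sup_idem] at hprod
    refine hprod.mono ?_
    rintro _ ⟨y, hy, z, hz, rfl⟩
    simp only [Set.mem_ofPred_eq, Complex.add_re, Nat.cast_succ] at hy hz ⊢
    linarith

lemma HasWeightsIn.pow_mul (hm : HasWeightsIn D m (m ^ 2) {z | z.re ≤ M})
    (hI : HasWeightsIn D I (m * I) {z | z.re < M}) (a : ℕ) :
    HasWeightsIn D (m ^ a * I) (m ^ (a + 1) * I) {z | z.re < (a + 1) * M} := by
  induction a with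
  | zero => simpa using hI
  | succ a ih =>
    have hprod := hm.mul ih (Ideal.pow_le_self two_ne_zero)
      (Ideal.mul_mono_left (Ideal.pow_le_pow_right (Nat.le_succ _)))
    rw [← mul_assoc, ← mul_assoc, ← mul_assoc, ← pow_succ', ← pow_succ', ← pow_add, add_comm 2,
      sup_idem] at hprod
    refine hprod.mono ?_
    rintro _ ⟨y, hy, z, hz, rfl⟩
    simp only [Set.mem_ofPred_eq, Complex.add_re, Nat.cast_succ] at hy hz ⊢
    linarith

lemma HasWeightsIn.mod_pow_mul (hM : 0 < M) (hm : HasWeightsIn D m (m ^ 2) {z | z.re ≤ M})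
    (hI : HasWeightsIn D I (m * I) {z | z.re < M}) (a : ℕ) :
    HasWeightsIn D I (m ^ a * I) {z | z.re < a * M} := by
  induction a with
  | zero => simp [HasWeightsIn]
  | succ a ih =>
    refine (ih.trans (hm.pow_mul hI a)).mono (Set.union_subset (fun z hz => ?_) ?_)
    · simp only [Set.mem_ofPred_eq, Nat.cast_succ] at hz ⊢
      linarith
    · simp

variable {R' : Type*} [CommRing R'] [Algebra ℂ R'] {D' : Derivation ℂ R' R'} {π : R →ₐ[ℂ] R'}

lemma one_le_mul_of_apply_eq_self
    (hm : HasWeightsIn D' (m.map π) ((m ^ 2).map π) {z | z.re ≤ M}) {a : ℕ}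
    (hπ : ∀ r ∈ m ^ (a + 2), π r = 0) {f : R} (hf : f ∈ m ^ (a + 1)) (hf0 : π f ≠ 0)
    (hD : D' (π f) = π f) : 1 ≤ (a + 1) * M := by
  by_contra hlt
  rw [Ideal.map_pow] at hm
  have hbot : m.map π ^ (a + 2) = ⊥ := by
    rw [← Ideal.map_pow, eq_bot_iff]
    exact Ideal.map_le_iff_le_comap.2 hπ
  have hpow := hm.pow a
  rw [hbot, ← Ideal.map_pow] at hpow
  exact hf0 (hpow.eq_zero_of_notMem (Ideal.mem_map_of_mem π hf) (l := 1) (by simpa using hlt)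
    (by simpa using hD))

lemma map_pow_eq_zero_of_weights (hM : 0 < M)
    (hm : HasWeightsIn D' (m.map π) ((m ^ 2).map π) {z | z.re ≤ M})
    (hI : HasWeightsIn D' (I.map π) ((m * I).map π) {z | z.re < M}) {k : ℕ}
    (hπ : ∀ r ∈ m ^ k * I, π r = 0) {x : R} (hx : x ^ k ∈ I) {w : ℂ} (hw : w.re = M)
    (hD : D' (π (x ^ k)) = (k * w) • π (x ^ k)) : π (x ^ k) = 0 := by
  rw [Ideal.map_pow] at hm
  rw [Ideal.map_mul] at hI
  have hbot : m.map π ^ k * I.map π = ⊥ := by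
    rw [← Ideal.map_pow, ← Ideal.map_mul, eq_bot_iff]
    exact Ideal.map_le_iff_le_comap.2 hπ
  have hmod := hm.mod_pow_mul hM hI k
  rw [hbot] at hmod
  exact hmod.eq_zero_of_notMem (Ideal.mem_map_of_mem π hx) (by simp [hw]) hD

end RealPart

end Weights

section VectorFields

/-- The derivation of `𝒪ₙ` given by the vector field `δ`. -/
def vectorFieldDerivation (δ : Fin n → On n) : Derivation ℂ (On n) (On n) :=
  ∑ i, δ i • pdDerivation i

lemma vectorFieldDerivation_apply (δ : Fin n → On n) (g : On n) :
    vectorFieldDerivation δ g = applyVF δ g := by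
  have hsum := congrFun (map_sum (Derivation.coeFnAddMonoidHom (R := ℂ) (A := On n) (M := On n))
    (fun i => δ i • pdDerivation i) Finset.univ) g
  rw [Finset.sum_apply] at hsum
  exact hsum

lemma vectorFieldDerivation_coordG (δ : Fin n → On n) (i : Fin n) :
    vectorFieldDerivation δ (coordG i) = δ i := by
  simp [vectorFieldDerivation_apply, applyVF, pd_coordG]

lemma vectorFieldDerivation_pd (δ : Fin n → On n) (g : On n) (i : Fin n) :
    vectorFieldDerivation δ (pd i g) =
      pd i (vectorFieldDerivation δ g) - ∑ j, pd i (δ j) * pd j g := by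
  simp only [vectorFieldDerivation_apply, applyVF, ← pdDerivation_apply, map_sum,
    ← Finset.sum_sub_distrib]
  refine Finset.sum_congr rfl fun j _ => ?_
  simp only [pdDerivation_apply, pd_mul, pd_comm i j]
  ring

lemma vectorFieldDerivation_neg (δ : Fin n → On n) :
    vectorFieldDerivation (-δ) = -vectorFieldDerivation δ := by
  refine Derivation.ext fun g => ?_
  simpa only [Derivation.neg_apply, vectorFieldDerivation_apply] using! map_neg (gradMap n g) δ

section StableIdeals

variable {K R : Type*} [CommRing K] [CommRing R] [Algebra K R] {D : Derivation K R R}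
  {A B : Ideal R}

lemma derivation_mem_mul (hA : ∀ a ∈ A, D a ∈ A) (hB : ∀ b ∈ B, D b ∈ B) {a : R}
    (ha : a ∈ A * B) : D a ∈ A * B := by
  induction ha using Submodule.mul_induction_on' with
  | mem_mul_mem a ha b hb =>
    rw [Derivation.leibniz, smul_eq_mul, smul_eq_mul, mul_comm b]
    exact add_mem (Ideal.mul_mem_mul ha (hB b hb)) (Ideal.mul_mem_mul (hA a ha) hb)
  | add a _ b _ ha hb => rw [map_add]; exact add_mem ha hb

lemma derivation_mem_pow (hA : ∀ a ∈ A, D a ∈ A) (k : ℕ) : ∀ a ∈ A ^ k, D a ∈ A ^ k := by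
  induction k with
  | zero => simp
  | succ k ih =>
    rw [pow_succ]
    exact fun a => derivation_mem_mul ih hA

lemma derivation_mem_span {s : Set R} (hs : ∀ a ∈ s, D a ∈ Ideal.span s) {a : R}
    (ha : a ∈ Ideal.span s) : D a ∈ Ideal.span s := by
  induction ha using Submodule.span_induction with
  | mem a ha => exact hs a ha
  | zero => simp
  | add a b _ _ ha hb => rw [map_add]; exact add_mem ha hb
  | smul r a hspan ha =>
    rw [smul_eq_mul, Derivation.leibniz, smul_eq_mul, smul_eq_mul]
    exact add_mem (Ideal.mul_mem_left _ _ ha) (Ideal.mul_mem_right _ _ hspan)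

end StableIdeals

lemma vectorFieldDerivation_mem_mId {δ : Fin n → On n} (hδ : ∀ i, δ i ∈ mId n) (g : On n) :
    vectorFieldDerivation δ g ∈ mId n := by
  rw [vectorFieldDerivation_apply]
  exact Ideal.sum_mem _ fun i _ => Ideal.mul_mem_right _ _ (hδ i)

-- If `δ i` is a unit, differentiating lowers the least `k` with `xᵢ ^ k ∈ I`.
lemma mem_mId_of_stable {δ : Fin n → On n} {I : Ideal (On n)}
    (hI : ∀ a ∈ I, vectorFieldDerivation δ a ∈ I) (hIm : I ≤ mId n) {K : ℕ}
    (hK : mId n ^ K ≤ I) (i : Fin n) : δ i ∈ mId n := by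
  by_contra hunit
  rw [notMem_mId_iff_isUnit] at hunit
  have hpow : ∀ k, coordG i ^ k ∉ I := by
    intro k
    induction k with
    | zero => simpa using fun h => mem_mId_iff.not.2 (by simp) (hIm h)
    | succ k ih =>
      intro hk
      have hD := hI _ hk
      rw [Derivation.leibniz_pow, vectorFieldDerivation_coordG, Nat.add_sub_cancel, smul_eq_mul,
        ← Nat.cast_smul_eq_nsmul ℂ] at hD
      have hD' := I.smul_of_tower_mem ((k + 1 : ℕ) : ℂ)⁻¹ hD
      rw [inv_smul_smul₀ (Nat.cast_ne_zero.2 k.succ_ne_zero),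
        Ideal.mul_unit_mem_iff_mem _ hunit] at hD'
      exact ih hD'
  exact hpow K (hK (Ideal.pow_mem_pow (coordG_mem_mId i) K))

lemma sub_evalZero_mem_mId (r : On n) : r - algebraMap ℂ (On n) (evalZero r) ∈ mId n := by
  simp [mem_mId_iff, AlgHom.commutes]

lemma sub_sum_evalZero_pd_smul_coordG_mem {g : On n} (hg : g ∈ mId n) :
    g - ∑ i, evalZero (pd i g) • coordG i ∈ mId n ^ 2 := by
  rw [mId_eq_span_coordG, Ideal.mem_span_range_iff_exists_fun] at hg
  obtain ⟨c, rfl⟩ := hg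
  have hpd : ∀ j, evalZero (pd j (∑ i, c i * coordG i)) = evalZero (c j) := by
    intro j
    rw [← pdDerivation_apply, map_sum, map_sum]
    simp [pdDerivation_apply, pd_coordG, evalZero_coordG, apply_ite evalZero]
  simp only [hpd, ← Finset.sum_sub_distrib, Algebra.smul_def, ← sub_mul]
  exact sq (mId n) ▸ Ideal.sum_mem _ fun i _ =>
    Ideal.mul_mem_mul (sub_evalZero_mem_mId _) (coordG_mem_mId i)

lemma restrictScalars_span_le {S : Set (On n)} {A : Ideal (On n)}
    (hS : mId n * Ideal.span S ≤ A) :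
    (Ideal.span S ⊔ A).restrictScalars ℂ ≤ A.restrictScalars ℂ ⊔ Submodule.span ℂ S := by
  rw [Submodule.restrictScalars_sup, sup_le_iff]
  refine ⟨fun a ha => ?_, le_sup_left⟩
  rw [Submodule.restrictScalars_mem] at ha
  induction ha using Submodule.span_induction with
  | mem a ha => exact Submodule.mem_sup_right (Submodule.subset_span ha)
  | zero => exact zero_mem _
  | add a b _ _ ha hb => exact add_mem ha hb
  | smul r a hspan ha =>
    have hsplit : r • a = (r - algebraMap ℂ (On n) (evalZero r)) * a + evalZero r • a := by
      rw [smul_eq_mul, Algebra.smul_def (evalZero r)]; ring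
    rw [hsplit]
    exact add_mem (Submodule.mem_sup_left (hS (Ideal.mul_mem_mul (sub_evalZero_mem_mId r) hspan)))
      (Submodule.smul_mem _ _ ha)

section TruncatedVectorFields

variable {δ : Fin n → On n}

/-- The derivation induced on `𝒪ₙ / 𝔪 ^ (N + 1)` by a vector field vanishing at the origin. -/
def truncatedDerivation (hδ : ∀ i, δ i ∈ mId n) (N : ℕ) :
    Derivation ℂ (On n ⧸ mId n ^ (N + 1)) (On n ⧸ mId n ^ (N + 1)) :=
  Derivation.liftOfSurjective (f := Ideal.Quotient.mkₐ ℂ (mId n ^ (N + 1)))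
    (Ideal.Quotient.mkₐ_surjective ℂ _) (d := vectorFieldDerivation δ) fun a ha => by
      rw [Ideal.Quotient.mkₐ_eq_mk, Ideal.Quotient.eq_zero_iff_mem] at ha ⊢
      exact derivation_mem_pow (fun a _ => vectorFieldDerivation_mem_mId hδ a) _ a ha

lemma truncatedDerivation_mk (hδ : ∀ i, δ i ∈ mId n) (N : ℕ) (g : On n) :
    truncatedDerivation hδ N (Ideal.Quotient.mkₐ ℂ (mId n ^ (N + 1)) g) =
      Ideal.Quotient.mkₐ ℂ (mId n ^ (N + 1)) (vectorFieldDerivation δ g) :=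
  Derivation.liftOfSurjective_apply _ _ _

lemma hasWeightsIn_span {ι : Type*} [Fintype ι] [DecidableEq ι] (hδ : ∀ i, δ i ∈ mId n) (N : ℕ)
    {A : Ideal (On n)} (hA : ∀ a ∈ A, vectorFieldDerivation δ a ∈ A) (v : ι → On n)
    (hv : mId n * Ideal.span (Set.range v) ≤ A) (C : Matrix ι ι ℂ)
    (hC : ∀ i, vectorFieldDerivation δ (v i) - ∑ j, C i j • v j ∈ A) :
    HasWeightsIn (truncatedDerivation hδ N)
      ((Ideal.span (Set.range v) ⊔ A).map (Ideal.Quotient.mkₐ ℂ (mId n ^ (N + 1))))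
      (A.map (Ideal.Quotient.mkₐ ℂ (mId n ^ (N + 1)))) (spectrum ℂ C) :=
  .map_of_generators (Ideal.Quotient.mkₐ_surjective ℂ _) (truncatedDerivation_mk hδ N) hA v C hC
    (restrictScalars_span_le hv)

lemma hasWeightsIn_mId (hδ : ∀ i, δ i ∈ mId n) (N : ℕ) :
    HasWeightsIn (truncatedDerivation hδ N)
      ((mId n).map (Ideal.Quotient.mkₐ ℂ (mId n ^ (N + 1))))
      ((mId n ^ 2).map (Ideal.Quotient.mkₐ ℂ (mId n ^ (N + 1)))) (spectrum ℂ (linPart δ)) := by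
  have hspan := hasWeightsIn_span hδ N
    (derivation_mem_pow (fun a _ => vectorFieldDerivation_mem_mId hδ a) 2) coordG
    (by rw [← mId_eq_span_coordG, sq]) (linPart δ).transpose fun i => by
      simpa [vectorFieldDerivation_coordG, linPart, ev0_eq_evalZero] using
        sub_sum_evalZero_pd_smul_coordG_mem (hδ i)
  rwa [← mId_eq_span_coordG, sup_eq_left.2 (Ideal.pow_le_self two_ne_zero),
    spectrum_transpose] at hspan

/-- The ideal `⟨g, ∂g/∂x₁, …, ∂g/∂xₙ⟩`, whose codimension is the Tjurina number. -/
def tjurinaIdeal (g : On n) : Ideal (On n) := Jac n g ⊔ Ideal.span {g}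

variable {g u : On n}

lemma self_mem_tjurinaIdeal (g : On n) : g ∈ tjurinaIdeal g :=
  Ideal.mem_sup_right (Ideal.mem_span_singleton_self g)

lemma pd_mem_tjurinaIdeal (g : On n) (i : Fin n) : pd i g ∈ tjurinaIdeal g :=
  Ideal.mem_sup_left (Ideal.subset_span ⟨i, rfl⟩)

lemma tjurinaIdeal_le_mId (hg : g ∈ mId n ^ 2) : tjurinaIdeal g ≤ mId n := by
  rw [tjurinaIdeal, Jac, sup_le_iff, Ideal.span_le, Ideal.span_singleton_le_iff_mem]
  refine ⟨?_, Ideal.pow_le_self two_ne_zero hg⟩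
  rintro _ ⟨i, rfl⟩
  exact pow_one (mId n) ▸ pd_mem_mId_pow i hg

lemma vectorFieldDerivation_pd_of_eq_mul (hg : vectorFieldDerivation δ g = u * g) (i : Fin n) :
    vectorFieldDerivation δ (pd i g) = u * pd i g + g * pd i u - ∑ j, pd i (δ j) * pd j g := by
  rw [vectorFieldDerivation_pd, hg, pd_mul]

lemma vectorFieldDerivation_mem_tjurinaIdeal (hg : vectorFieldDerivation δ g = u * g) :
    ∀ a ∈ tjurinaIdeal g, vectorFieldDerivation δ a ∈ tjurinaIdeal g := by
  intro a
  rw [tjurinaIdeal, Jac, ← Ideal.span_union]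
  refine derivation_mem_span ?_
  rw [Ideal.span_union, ← Jac, ← tjurinaIdeal]
  rintro _ (⟨i, rfl⟩ | rfl)
  · beta_reduce
    rw [vectorFieldDerivation_pd_of_eq_mul hg]
    exact sub_mem (add_mem (Ideal.mul_mem_left _ _ (pd_mem_tjurinaIdeal g i))
      (Ideal.mul_mem_right _ _ (self_mem_tjurinaIdeal g)))
      (Ideal.sum_mem _ fun j _ => Ideal.mul_mem_left _ _ (pd_mem_tjurinaIdeal g j))
  · rw [hg]
    exact Ideal.mul_mem_left _ _ (self_mem_tjurinaIdeal _)

end TruncatedVectorFields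

end VectorFields

section WeightComparison

open scoped Pointwise

variable {δ : Fin n → On n} {g u : On n}

lemma vectorFieldDerivation_pd_sub_sum_mem (hg : vectorFieldDerivation δ g = u * g) (i : Fin n) :
    vectorFieldDerivation δ (pd i g) -
        ∑ j, (algebraMap ℂ _ (evalZero u) - linPart δ) i j • pd j g ∈
      Ideal.span {g} ⊔ mId n * tjurinaIdeal g := by
  have hsum : vectorFieldDerivation δ (pd i g) -
      ∑ j, (algebraMap ℂ _ (evalZero u) - linPart δ) i j • pd j g = g * pd i u +
        ((u - algebraMap ℂ (On n) (evalZero u)) * pd i g -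
          ∑ j, (pd i (δ j) - algebraMap ℂ (On n) (evalZero (pd i (δ j)))) * pd j g) := by
    rw [vectorFieldDerivation_pd_of_eq_mul hg]
    simp only [Matrix.sub_apply, Matrix.algebraMap_matrix_apply, linPart, Matrix.of_apply,
      ev0_eq_evalZero, sub_smul, sub_mul, Finset.sum_sub_distrib, ite_smul, zero_smul,
      Finset.sum_ite_eq, Finset.mem_univ, if_true, Algebra.algebraMap_self, RingHom.id_apply,
      Algebra.smul_def (evalZero _)]
    ring
  rw [hsum]
  exact add_mem (Ideal.mem_sup_left (Ideal.mul_mem_right _ _ (Ideal.mem_span_singleton_self g)))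
    (Ideal.mem_sup_right (sub_mem
      (Ideal.mul_mem_mul (sub_evalZero_mem_mId u) (pd_mem_tjurinaIdeal g i))
      (Ideal.sum_mem _ fun j _ =>
        Ideal.mul_mem_mul (sub_evalZero_mem_mId _) (pd_mem_tjurinaIdeal g j))))

-- Modulo `𝔪 I`, `δ` scales `g` by `u(0)` and acts on the span of the `∂g/∂xᵢ` by
-- `u(0) - linPart δ`.
lemma hasWeightsIn_tjurinaIdeal (hδ : ∀ i, δ i ∈ mId n) (hg : vectorFieldDerivation δ g = u * g)
    (N : ℕ) :
    HasWeightsIn (truncatedDerivation hδ N)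
      ((tjurinaIdeal g).map (Ideal.Quotient.mkₐ ℂ (mId n ^ (N + 1))))
      ((mId n * tjurinaIdeal g).map (Ideal.Quotient.mkₐ ℂ (mId n ^ (N + 1))))
      ((({evalZero u} : Set ℂ) - spectrum ℂ (linPart δ)) ∪ {evalZero u}) := by
  have hmI : ∀ a ∈ mId n * tjurinaIdeal g, vectorFieldDerivation δ a ∈ mId n * tjurinaIdeal g :=
    fun a => derivation_mem_mul (fun a _ => vectorFieldDerivation_mem_mId hδ a)
      (vectorFieldDerivation_mem_tjurinaIdeal hg)
  have hgI : ∀ a ∈ Ideal.span {g} ⊔ mId n * tjurinaIdeal g,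
      vectorFieldDerivation δ a ∈ Ideal.span {g} ⊔ mId n * tjurinaIdeal g := by
    intro a ha
    obtain ⟨b, hb, c, hc, rfl⟩ := Submodule.mem_sup.1 ha
    rw [map_add]
    refine add_mem (Ideal.mem_sup_left (derivation_mem_span ?_ hb))
      (Ideal.mem_sup_right (hmI c hc))
    rintro _ rfl
    exact hg ▸ Ideal.mul_mem_left _ _ (Ideal.mem_span_singleton_self _)
  have hfirst := hasWeightsIn_span hδ N hmI (fun _ : Unit => g)
    (by rw [Set.range_const]; exact Ideal.mul_mono_right le_sup_right)
    (algebraMap ℂ _ (evalZero u)) fun _ => by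
      rw [hg, Fintype.sum_unique, Matrix.algebraMap_matrix_apply, if_pos rfl,
        Algebra.algebraMap_self, RingHom.id_apply, Algebra.smul_def, ← sub_mul]
      exact Ideal.mul_mem_mul (sub_evalZero_mem_mId u) (self_mem_tjurinaIdeal g)
  have hsecond := hasWeightsIn_span hδ N hgI (fun i => pd i g)
    (Ideal.mul_mono_right le_sup_left |>.trans le_sup_right)
    (algebraMap ℂ _ (evalZero u) - linPart δ) (vectorFieldDerivation_pd_sub_sum_mem hg)
  rw [Set.range_const, spectrum.scalar_eq] at hfirst
  rw [← sup_assoc, ← spectrum.singleton_sub_eq] at hsecond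
  have hweights := hsecond.trans hfirst
  rwa [← Jac, ← tjurinaIdeal, sup_eq_left.2 Ideal.mul_le_right] at hweights

lemma linearForm_smul (c : ℂ) (v : Fin n → ℂ) : linearForm (c • v) = c • linearForm v := by
  simp [linearForm, Finset.smul_sum, smul_smul]

lemma vectorFieldDerivation_linearForm_sub_mem (hδ : ∀ i, δ i ∈ mId n) (v : Fin n → ℂ) :
    vectorFieldDerivation δ (linearForm v) - linearForm ((linPart δ).mulVec v) ∈ mId n ^ 2 := by
  have hsum : vectorFieldDerivation δ (linearForm v) - linearForm ((linPart δ).mulVec v) =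
      ∑ j, v j • (δ j - ∑ i, evalZero (pd i (δ j)) • coordG i) := by
    simp only [linearForm, map_sum, Derivation.map_smul, vectorFieldDerivation_coordG, smul_sub,
      Finset.sum_sub_distrib, Finset.smul_sum, Matrix.mulVec, dotProduct, Finset.sum_smul,
      smul_smul, linPart, Matrix.of_apply, ev0_eq_evalZero, mul_comm (v _)]
    rw [Finset.sum_comm (f := fun i j => (evalZero (pd i (δ j)) * v j) • coordG i)]
  rw [hsum]
  exact Ideal.sum_mem _ fun j _ =>
    Submodule.smul_of_tower_mem _ _ (sub_sum_evalZero_pd_smul_coordG_mem (hδ j))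

lemma vectorFieldDerivation_linearForm_pow_sub_mem (hδ : ∀ i, δ i ∈ mId n) {w : ℂ}
    {v : Fin n → ℂ} (hv : (linPart δ).mulVec v = w • v) (k : ℕ) :
    vectorFieldDerivation δ (linearForm v ^ k) - (k * w) • linearForm v ^ k ∈
      mId n ^ (k + 1) := by
  rcases k with _ | k
  · simp
  have hlin := vectorFieldDerivation_linearForm_sub_mem hδ v
  rw [hv, linearForm_smul] at hlin
  have hpow : vectorFieldDerivation δ (linearForm v ^ (k + 1)) -
      ((k + 1 : ℕ) * w) • linearForm v ^ (k + 1) = ((k + 1 : ℕ) : On n) * (linearForm v ^ k *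
        (vectorFieldDerivation δ (linearForm v) - w • linearForm v)) := by
    simp only [Derivation.leibniz_pow, nsmul_eq_mul, smul_eq_mul, Algebra.smul_def w,
      Algebra.smul_def (_ * w), map_mul, map_natCast, Nat.add_sub_cancel]
    ring
  rw [hpow, add_assoc, pow_add]
  exact Ideal.mul_mem_left _ _
    (Ideal.mul_mem_mul (Ideal.pow_mem_pow (linearForm_mem_mId v) k) hlin)

lemma exists_mulVec_eq_smul {B : Matrix (Fin n) (Fin n) ℂ} {w : ℂ} (hw : w ∈ spectrum ℂ B) :
    ∃ v ≠ 0, B.mulVec v = w • v := by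
  rw [← Matrix.spectrum_toLin', ← Module.End.hasEigenvalue_iff_mem_spectrum] at hw
  obtain ⟨v, hv⟩ := hw.exists_hasEigenvector
  exact ⟨v, hv.2, by simpa using hv.apply_eq_smul⟩

-- Otherwise a power `x ^ K ∈ I` of an eigenvector `x` of weight `w` would vanish in
-- `𝒪ₙ / 𝔪 ^ (K + 1)`, since the weights of `I` modulo `𝔪 ^ K I` have real part below `K * w`.
lemma exists_re_le_of_applyVF_eq_mul (hδ : ∀ i, δ i ∈ mId n)
    (hg : vectorFieldDerivation δ g = u * g) (hg2 : g ∈ mId n ^ 2)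
    (hfin : FiniteDimensional ℂ (On n ⧸ Jac n g)) {w : ℂ} (hw : w ∈ spectrum ℂ (linPart δ))
    (hmax : ∀ l ∈ spectrum ℂ (linPart δ), l.re ≤ w.re) (hpos : 0 < w.re) :
    w.re ≤ (evalZero u).re ∨
      ∃ l ∈ spectrum ℂ (linPart δ), w.re ≤ (evalZero u).re - l.re := by
  by_contra! hlt
  obtain ⟨K, hK⟩ := exists_mId_pow_le hfin
  obtain ⟨v, hv0, hv⟩ := exists_mulVec_eq_smul hw
  let π := Ideal.Quotient.mkₐ ℂ (mId n ^ (K + 1))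
  have hπ : ∀ a, π a = 0 ↔ a ∈ mId n ^ (K + 1) := fun _ => Ideal.Quotient.eq_zero_iff_mem
  have hI : HasWeightsIn (truncatedDerivation hδ K) ((tjurinaIdeal g).map π)
      ((mId n * tjurinaIdeal g).map π) {z | z.re < w.re} := by
    refine (hasWeightsIn_tjurinaIdeal hδ hg K).mono ?_
    rintro _ (⟨_, rfl, l, hl, rfl⟩ | rfl)
    · simpa using hlt.2 l hl
    · exact hlt.1
  have hzero : ∀ a ∈ mId n ^ K * tjurinaIdeal g, π a = 0 := fun a ha =>
    (hπ a).2 (pow_succ (mId n) K ▸ Ideal.mul_mono_right (tjurinaIdeal_le_mId hg2) ha)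
  have hx : linearForm v ^ K ∈ tjurinaIdeal g :=
    Ideal.mem_sup_left (hK (Ideal.pow_mem_pow (linearForm_mem_mId v) K))
  refine linearForm_pow_notMem hv0 K ((hπ _).1 ?_)
  refine map_pow_eq_zero_of_weights hpos ((hasWeightsIn_mId hδ K).mono hmax) hI hzero hx rfl ?_
  rw [truncatedDerivation_mk, ← map_smul, ← sub_eq_zero, ← map_sub]
  exact (hπ _).2 (vectorFieldDerivation_linearForm_pow_sub_mem hδ hv K)

lemma re_pos_of_applyVF_eq_self [NeZero n] (hδ : ∀ i, δ i ∈ mId n) {f : On n}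
    (hf : vectorFieldDerivation δ f = f) (hf2 : f ∈ mId n ^ 2)
    (hfin : FiniteDimensional ℂ (On n ⧸ Jac n f)) {M : ℝ}
    (hmax : ∀ l ∈ spectrum ℂ (linPart δ), l.re ≤ M) : 0 < M := by
  classical
  have hex := exists_notMem_mId_pow hfin
  obtain ⟨a, ha⟩ : ∃ a, Nat.find hex = a + 2 :=
    Nat.exists_eq_add_of_le' ((Nat.le_find_iff _ _).2 fun k hk => by
      simpa using Ideal.pow_le_pow_right (by omega : k ≤ 2) hf2)
  have hmem : f ∈ mId n ^ (a + 1) := not_not.1 (Nat.find_min hex (by omega))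
  have hnotMem : f ∉ mId n ^ (a + 2) := ha ▸ Nat.find_spec hex
  have hle : 1 ≤ (a + 1) * M :=
    one_le_mul_of_apply_eq_self ((hasWeightsIn_mId hδ (a + 1)).mono hmax)
      (fun _ => Ideal.Quotient.eq_zero_iff_mem.2) hmem
      (fun h => hnotMem (Ideal.Quotient.eq_zero_iff_mem.1 h))
      (by rw [truncatedDerivation_mk, hf])
  exact pos_of_mul_pos_right (zero_lt_one.trans_le hle) (by positivity)

lemma linPart_neg (δ : Fin n → On n) : linPart (-δ) = -linPart δ := by
  ext i j
  simp [linPart, ev0_eq_evalZero, ← pdDerivation_apply]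

lemma exists_one_sub_re_le_re (hδ : ∀ i, δ i ∈ mId n) {f : On n}
    (hf : vectorFieldDerivation δ f = f) (hf2 : f ∈ mId n ^ 2)
    (hfin : FiniteDimensional ℂ (On n ⧸ Jac n f)) {w : ℂ} (hw : w ∈ spectrum ℂ (linPart δ))
    (hmin : ∀ l ∈ spectrum ℂ (linPart δ), w.re ≤ l.re) (hneg : w.re < 0) :
    ∃ l ∈ spectrum ℂ (linPart δ), 1 - w.re ≤ l.re := by
  have hspec : ∀ l, l ∈ spectrum ℂ (linPart (-δ)) ↔ -l ∈ spectrum ℂ (linPart δ) := fun l => by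
    rw [linPart_neg, ← spectrum.neg_eq, Set.mem_neg]
  have hnegf : vectorFieldDerivation (-δ) f = (-1 : On n) * f := by
    rw [vectorFieldDerivation_neg, Derivation.neg_apply, hf]
    exact (neg_one_mul f).symm
  have hmax : ∀ l ∈ spectrum ℂ (linPart (-δ)), l.re ≤ (-w).re := fun l hl => by
    simpa using neg_le_neg (hmin (-l) ((hspec l).1 hl))
  have heval : (evalZero (-1 : On n)).re = -1 := by simp
  rcases exists_re_le_of_applyVF_eq_mul (fun i => (mId n).neg_mem (hδ i)) hnegf hf2 hfin
    ((hspec (-w)).2 (by rwa [neg_neg])) hmax (by simpa using hneg) with hle | ⟨l, hl, hle⟩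
  · rw [heval, Complex.neg_re] at hle
    linarith
  · rw [heval, Complex.neg_re] at hle
    exact ⟨-l, (hspec l).1 hl, by rw [Complex.neg_re]; linarith⟩

theorem isUnit_of_applyVF_eq_mul [NeZero n] {f h b : On n} (hf : applyVF δ f = f)
    (hh : applyVF δ h = b * h) (hf2 : f ∈ mId n ^ 2) (hh2 : h ∈ mId n ^ 2)
    (hffin : FiniteDimensional ℂ (On n ⧸ Jac n f))
    (hhfin : FiniteDimensional ℂ (On n ⧸ Jac n h)) : IsUnit b := by
  rw [← vectorFieldDerivation_apply] at hf hh
  rw [← notMem_mId_iff_isUnit, mem_mId_iff]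
  intro hb
  obtain ⟨K, hK⟩ := exists_mId_pow_le hffin
  have hδ : ∀ i, δ i ∈ mId n :=
    mem_mId_of_stable (vectorFieldDerivation_mem_tjurinaIdeal (hf.trans (one_mul f).symm))
      (tjurinaIdeal_le_mId hf2) (hK.trans le_sup_left)
  have hfinite := Matrix.finite_spectrum (linPart δ)
  have hne : (spectrum ℂ (linPart δ)).Nonempty :=
    spectrum.nonempty_of_isAlgClosed_of_finiteDimensional ℂ _
  obtain ⟨wmax, hwmax, hmax⟩ := Set.exists_max_image _ Complex.re hfinite hne
  obtain ⟨wmin, hwmin, hmin⟩ := Set.exists_min_image _ Complex.re hfinite hne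
  have hpos : 0 < wmax.re := re_pos_of_applyVF_eq_self hδ hf hf2 hffin hmax
  have hmin_le : wmin.re ≤ -wmax.re := by
    rcases exists_re_le_of_applyVF_eq_mul hδ hh hh2 hhfin hwmax hmax hpos with hle | ⟨l, hl, hle⟩
    · rw [hb, Complex.zero_re] at hle
      linarith
    · rw [hb, Complex.zero_re] at hle
      linarith [hmin l hl]
  obtain ⟨l, hl, hle⟩ := exists_one_sub_re_le_re hδ hf hf2 hffin hwmin hmin (by linarith)
  linarith [hmax l hl]

end WeightComparison

section Codimension

variable {k R M P : Type*} [Field k] [CommRing R] [Algebra k R] [AddCommGroup M] [Module R M]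
  [Module k M] [IsScalarTower k R M] [AddCommGroup P] [Module R P] [Module k P]
  [IsScalarTower k R P]

lemma finiteDimensional_quotient_of_le {p q : Submodule R P} [FiniteDimensional k (P ⧸ p)]
    (h : p ≤ q) : FiniteDimensional k (P ⧸ q) :=
  FiniteDimensional.of_surjective ((Submodule.factor h).restrictScalars k)
    (Submodule.factor_surjective h)

lemma finrank_quotient_eq_iff_le {p q : Submodule R P} [FiniteDimensional k (P ⧸ p)]
    (h : p ≤ q) :
    Module.finrank k (P ⧸ p) = Module.finrank k (P ⧸ q) ↔ q ≤ p := by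
  refine ⟨fun heq x hx => ?_, fun hqp => by rw [le_antisymm h hqp]⟩
  have : FiniteDimensional k (P ⧸ q) := finiteDimensional_quotient_of_le h
  have hinj := (LinearMap.injective_iff_surjective_of_finrank_eq_finrank heq
    (f := (Submodule.factor h).restrictScalars k)).2 (Submodule.factor_surjective h)
  rw [← Submodule.Quotient.mk_eq_zero] at hx ⊢
  exact hinj (hx.trans (map_zero _).symm)

lemma comap_map_sup (φ : M →ₗ[R] P) (N : Submodule R M) (L : Submodule R P) :
    (N.map φ ⊔ L).comap φ = N ⊔ L.comap φ := by
  have h := Submodule.comap_map_sup_of_comap_le (f := φ) (p := N ⊔ L.comap φ) (q := L) le_sup_right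
  rwa [Submodule.map_sup, sup_assoc, sup_eq_right.2 (Submodule.map_comap_le φ L)] at h

-- The sequence `0 → M / φ⁻¹(φ N + L) → P / (φ N + L) → P / (φ M + L) → 0` is exact.
lemma finrank_quotient_map_sup (φ : M →ₗ[R] P) (N : Submodule R M) (L : Submodule R P)
    [FiniteDimensional k (P ⧸ (N.map φ ⊔ L))] :
    Module.finrank k (P ⧸ (N.map φ ⊔ L)) =
      Module.finrank k (P ⧸ (LinearMap.range φ ⊔ L)) +
        Module.finrank k (M ⧸ (N ⊔ L.comap φ)) := by
  have hle : N.map φ ⊔ L ≤ LinearMap.range φ ⊔ L := sup_le_sup_right LinearMap.map_le_range L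
  rw [← comap_map_sup]
  let ι := (Submodule.mapQ ((N.map φ ⊔ L).comap φ) (N.map φ ⊔ L) φ le_rfl).restrictScalars k
  let π := (Submodule.factor hle).restrictScalars k
  have hι : Function.Injective ι := LinearMap.ker_eq_bot.1 <| by
    rw [LinearMap.ker_restrictScalars, Submodule.ker_mapQ, Submodule.mkQ_map_self]
    rfl
  have hπ : LinearMap.range π = ⊤ := LinearMap.range_eq_top.2 (Submodule.factor_surjective hle)
  have hL : L.map (N.map φ ⊔ L).mkQ = ⊥ :=
    LinearMap.le_ker_iff_map.1 (le_sup_right.trans (Submodule.ker_mkQ _).ge)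
  have hexact : LinearMap.ker π = LinearMap.range ι := by
    rw [LinearMap.ker_restrictScalars, LinearMap.range_restrictScalars, Submodule.ker_mapQ,
      Submodule.range_mapQ, Submodule.comap_id, Submodule.map_sup, hL, sup_bot_eq]
  rw [← LinearMap.finrank_range_add_finrank_ker π, hπ, finrank_top, hexact,
    LinearMap.finrank_range_of_inj hι]

end Codimension

section BruceRoberts

variable {X : Set (Fin n → ℂ)} {f h : On n}

lemma BRIdeal_le_Jac (X : Set (Fin n → ℂ)) (f : On n) : BRIdeal n X f ≤ Jac n f := fun _ hg =>
  mem_range_gradMap.1 (LinearMap.map_le_range hg)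

lemma range_gradMap (f : On n) : LinearMap.range (gradMap n f) = Jac n f :=
  Submodule.ext fun _ => mem_range_gradMap

lemma sup_span_singleton_le_left_iff {I : Ideal (On n)} : I ⊔ Ideal.span {f} ≤ I ↔ f ∈ I := by
  rw [sup_le_iff, Ideal.span_singleton_le_iff_mem, and_iff_right le_rfl]

lemma mu_eq_tau_iff [FiniteDimensional ℂ (On n ⧸ Jac n f)] :
    mu n f = tau n f ↔ f ∈ Jac n f :=
  (finrank_quotient_eq_iff_le le_sup_left).trans sup_span_singleton_le_left_iff

lemma muX_eq_tauX_iff [FiniteDimensional ℂ (On n ⧸ BRIdeal n X f)] :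
    muX n X f = tauX n X f ↔ f ∈ BRIdeal n X f :=
  (finrank_quotient_eq_iff_le le_sup_left).trans sup_span_singleton_le_left_iff

lemma tauX_eq_tau_add_finrank [FiniteDimensional ℂ (On n ⧸ BRIdeal n X f)] :
    tauX n X f = tau n f +
      Module.finrank ℂ ((Fin n → On n) ⧸ (ThetaX n X ⊔ ThetaF n f)) := by
  have : FiniteDimensional ℂ (On n ⧸ ((ThetaX n X).map (gradMap n f) ⊔ Ideal.span {f})) :=
    finiteDimensional_quotient_of_le (p := BRIdeal n X f) le_sup_left
  have hrank := finrank_quotient_map_sup (k := ℂ) (gradMap n f) (ThetaX n X) (Ideal.span {f})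
  rwa [range_gradMap] at hrank

lemma finite_of_finrank_eq {I J : Ideal (On n)} [FiniteDimensional ℂ (On n ⧸ J)] (hJ : J ≠ ⊤)
    (heq : Module.finrank ℂ (On n ⧸ I) = Module.finrank ℂ (On n ⧸ J)) :
    FiniteDimensional ℂ (On n ⧸ I) := by
  have := Ideal.Quotient.nontrivial_iff.2 hJ
  exact Module.finite_of_finrank_pos (heq ▸ Module.finrank_pos)

lemma finrank_sub_mu_eq_iff [FiniteDimensional ℂ (On n ⧸ BRIdeal n X f)]
    (hf2 : f ∈ mId n ^ 2) (hJmin : Jmin n f h ≤ BRIdeal n X f) (hmu : mu n f = tau n f) :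
    (Module.finrank ℂ (On n ⧸ (Ideal.span {f} + Jmin n f h)) : ℤ) - mu n f =
        Module.finrank ℂ ((Fin n → On n) ⧸ (ThetaX n X ⊔ ThetaF n f)) ↔
      BRIdeal n X f ≤ Ideal.span {f} + Jmin n f h := by
  have hle : Ideal.span {f} + Jmin n f h ≤ BRIdeal n X f + Ideal.span {f} :=
    sup_le le_sup_right (hJmin.trans le_sup_left)
  have hne : BRIdeal n X f + Ideal.span {f} ≠ ⊤ := by
    refine ne_top_of_le_ne_top ?_
      ((sup_le_sup_right (BRIdeal_le_Jac X f) _).trans (tjurinaIdeal_le_mId hf2))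
    exact maximalIdeal_eq_mId (n := n) ▸ (IsLocalRing.maximalIdeal.isMaximal _).ne_top
  have hfinT : FiniteDimensional ℂ (On n ⧸ (BRIdeal n X f + Ideal.span {f})) :=
    finiteDimensional_quotient_of_le le_sup_left
  have hrank : Module.finrank ℂ (On n ⧸ (Ideal.span {f} + Jmin n f h)) =
      Module.finrank ℂ (On n ⧸ (BRIdeal n X f + Ideal.span {f})) ↔
      BRIdeal n X f ≤ Ideal.span {f} + Jmin n f h := by
    refine ⟨fun heq => ?_, fun hBR => by rw [le_antisymm hle (sup_le hBR le_sup_left)]⟩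
    have := finite_of_finrank_eq hne heq
    exact le_sup_left.trans ((finrank_quotient_eq_iff_le hle).1 heq)
  rw [← hrank, ← tauX, tauX_eq_tau_add_finrank, ← hmu]
  omega

end BruceRoberts

section Hypersurface

variable {X : Set (Fin n → ℂ)} {f h : On n}

lemma mem_ThetaX_iff_of_IX_eq_span (hX : IX n X = Ideal.span {h}) {δ : Fin n → On n} :
    δ ∈ ThetaX n X ↔ ∃ a, applyVF δ h = a * h := by
  change (∀ g ∈ IX n X, applyVF δ g ∈ IX n X) ↔ _
  rw [hX]
  constructor
  · intro hδ
    obtain ⟨a, ha⟩ := Ideal.mem_span_singleton'.1 (hδ h (Ideal.mem_span_singleton_self h))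
    exact ⟨a, ha.symm⟩
  · rintro ⟨a, ha⟩ g hg
    rw [← vectorFieldDerivation_apply] at ha ⊢
    refine derivation_mem_span ?_ hg
    rintro _ rfl
    exact Ideal.mem_span_singleton'.2 ⟨a, ha.symm⟩

lemma Jmin_le_BRIdeal (hX : IX n X = Ideal.span {h}) : Jmin n f h ≤ BRIdeal n X f := by
  refine (Jmin_le_map_HamF f h).trans (Submodule.map_mono fun δ hδ => ?_)
  exact (mem_ThetaX_iff_of_IX_eq_span hX).2 ⟨0, by rw [zero_mul]; exact hδ⟩

lemma Jmin_eq_bot [Subsingleton (Fin n)] (f h : On n) : Jmin n f h = ⊥ := by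
  rw [Jmin, Ideal.span_eq_bot]
  rintro _ ⟨⟨i, j⟩, rfl⟩
  simp only [Subsingleton.elim i j, sub_self]

-- Subtracting a multiple of `δ` from a logarithmic field of `h` leaves a Hamiltonian one.
lemma BRIdeal_le_of_applyVF_eq {δ : Fin n → On n} {b : On n}
    (hX : IX n X = Ideal.span {h}) (hfin : FiniteDimensional ℂ (On n ⧸ Jac n h))
    (hδf : applyVF δ f = f) (hδh : applyVF δ h = b * h) (hb : IsUnit b) :
    BRIdeal n X f ≤ Ideal.span {f} + Jmin n f h := by
  obtain ⟨b', hb'⟩ := hb.exists_left_inv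
  rintro _ ⟨ξ, hξ, rfl⟩
  obtain ⟨a, ha⟩ := (mem_ThetaX_iff_of_IX_eq_span hX).1 hξ
  have hsub : ∀ g, gradMap n g (ξ - (a * b') • δ) = applyVF ξ g - a * b' * applyVF δ g :=
    fun g => by rw [map_sub, map_smul]; rfl
  have hHam : ξ - (a * b') • δ ∈ HamF n h := by
    rw [HamF, LinearMap.mem_ker, hsub, ha, hδh]
    linear_combination (-a * h) * hb'
  have hJmin : applyVF ξ f - a * b' * f ∈ Jmin n f h := by
    rw [← map_HamF_eq_Jmin f hfin]
    exact ⟨_, hHam, by rw [hsub, hδf]⟩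
  exact Submodule.mem_sup.2 ⟨_, Ideal.mul_mem_left _ (a * b') (Ideal.mem_span_singleton_self f),
    _, hJmin, add_sub_cancel _ _⟩

lemma exists_applyVF_eq_of_BRIdeal_le (hX : IX n X = Ideal.span {h}) (hh : h ∈ Jac n h)
    (hle : BRIdeal n X f ≤ Ideal.span {f} + Jmin n f h) :
    ∃ δ b, applyVF δ h = h ∧ applyVF δ f = b * f := by
  obtain ⟨η, hη⟩ := mem_range_gradMap.2 hh
  have hηX : η ∈ ThetaX n X :=
    (mem_ThetaX_iff_of_IX_eq_span hX).2 ⟨1, hη.trans (one_mul h).symm⟩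
  obtain ⟨_, hbf, z, hz, hsum⟩ := Submodule.mem_sup.1 (hle ⟨η, hηX, rfl⟩)
  obtain ⟨b, rfl⟩ := Ideal.mem_span_singleton'.1 hbf
  obtain ⟨κ, hκ, rfl⟩ := Jmin_le_map_HamF f h hz
  refine ⟨η - κ, b, ?_, ?_⟩
  · change gradMap n h (η - κ) = h
    rw [map_sub, hη, LinearMap.mem_ker.1 hκ, sub_zero]
  · change gradMap n f (η - κ) = b * f
    rw [map_sub, ← hsum, add_sub_cancel_right]

theorem mem_BRIdeal_iff_of_IX_eq_span [NeZero n] (hX : IX n X = Ideal.span {h})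
    (hf2 : f ∈ mId n ^ 2) (hh2 : h ∈ mId n ^ 2)
    (hffin : FiniteDimensional ℂ (On n ⧸ Jac n f))
    (hhfin : FiniteDimensional ℂ (On n ⧸ Jac n h)) :
    f ∈ BRIdeal n X f ↔
      f ∈ Jac n f ∧ h ∈ Jac n h ∧ BRIdeal n X f ≤ Ideal.span {f} + Jmin n f h := by
  constructor
  · intro hf
    obtain ⟨δ, hδ, hδf⟩ := hf
    obtain ⟨b, hδh⟩ := (mem_ThetaX_iff_of_IX_eq_span hX).1 hδ
    have hb := isUnit_of_applyVF_eq_mul hδf hδh hf2 hh2 hffin hhfin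
    have hbh : b * h ∈ Jac n h := mem_range_gradMap.1 ⟨δ, hδh⟩
    exact ⟨mem_range_gradMap.1 ⟨δ, hδf⟩, ((Jac n h).unit_mul_mem_iff_mem hb).1 hbh,
      BRIdeal_le_of_applyVF_eq hX hhfin hδf hδh hb⟩
  · rintro ⟨-, hh, hle⟩
    obtain ⟨δ, b, hδh, hδf⟩ := exists_applyVF_eq_of_BRIdeal_le hX hh hle
    have hb := isUnit_of_applyVF_eq_mul hδh hδf hh2 hf2 hhfin hffin
    have hδX : δ ∈ ThetaX n X :=
      (mem_ThetaX_iff_of_IX_eq_span hX).2 ⟨1, hδh.trans (one_mul h).symm⟩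
    exact ((BRIdeal n X f).unit_mul_mem_iff_mem hb).1 ⟨δ, hδX, hδf⟩

end Hypersurface

section OneVariable

lemma exists_eq_coordG_pow_mul {f : On 1} (hf : f ∈ mId 1)
    (hfin : FiniteDimensional ℂ (On 1 ⧸ Jac 1 f)) :
    ∃ (k : ℕ) (u : On 1), IsUnit u ∧ f = coordG 0 ^ (k + 1) * u := by
  classical
  have hex := exists_notMem_mId_pow hfin
  obtain ⟨k, hk⟩ : ∃ k, Nat.find hex = k + 2 :=
    Nat.exists_eq_add_of_le' ((Nat.le_find_iff _ _).2 fun m hm => by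
      simpa using Ideal.pow_le_pow_right (by omega : m ≤ 1) (by rwa [pow_one]))
  have hmem : f ∈ mId 1 ^ (k + 1) := not_not.1 (Nat.find_min hex (by omega))
  have hnotMem : f ∉ mId 1 ^ (k + 2) := hk ▸ Nat.find_spec hex
  rw [mId_one_pow] at hmem
  obtain ⟨u, rfl⟩ := Ideal.mem_span_singleton.1 hmem
  refine ⟨k, u, notMem_mId_iff_isUnit.1 fun hu => hnotMem ?_, rfl⟩
  exact pow_succ (mId 1) (k + 1) ▸
    Ideal.mul_mem_mul (Ideal.pow_mem_pow (coordG_mem_mId 0) _) hu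

lemma associated_coordG_mul_pd {f : On 1} (hf : f ∈ mId 1)
    (hfin : FiniteDimensional ℂ (On 1 ⧸ Jac 1 f)) : Associated (coordG 0 * pd 0 f) f := by
  obtain ⟨k, u, hu, rfl⟩ := exists_eq_coordG_pow_mul hf hfin
  have hpow : pd 0 (coordG (0 : Fin 1) ^ (k + 1)) = ((k + 1 : ℕ) : On 1) * coordG 0 ^ k := by
    have hleibniz := Derivation.leibniz_pow (pdDerivation (0 : Fin 1)) (coordG 0) (k + 1)
    rwa [nsmul_eq_mul, smul_eq_mul, Nat.add_sub_cancel, pdDerivation_apply, pdDerivation_apply,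
      pd_coordG, if_pos rfl, mul_one] at hleibniz
  have hv : IsUnit (((k + 1 : ℕ) : On 1) * u + coordG 0 * pd 0 u) := by
    rw [isUnit_iff_evalZero_ne_zero, map_add, map_mul, map_mul, evalZero_coordG, zero_mul,
      add_zero, map_natCast]
    exact mul_ne_zero (Nat.cast_ne_zero.2 k.succ_ne_zero) (hu.map evalZero).ne_zero
  have hEuler : coordG 0 * pd 0 (coordG 0 ^ (k + 1) * u) =
      coordG 0 ^ (k + 1) * (((k + 1 : ℕ) : On 1) * u + coordG 0 * pd 0 u) := by
    rw [pd_mul, hpow]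
    ring
  rw [hEuler]
  exact (associated_mul_unit_left _ _ hv).trans (associated_mul_unit_right _ _ hu)

lemma applyVF_fin_one (δ : Fin 1 → On 1) (g : On 1) : applyVF δ g = δ 0 * pd 0 g := by
  rw [applyVF, Fin.sum_univ_one]

lemma isRadical_IX (X : Set (Fin n → ℂ)) : (IX n X).IsRadical := by
  rintro g ⟨k, hk⟩
  rw [IX, RingHom.mem_ker, map_pow] at hk
  rw [IX, RingHom.mem_ker]
  obtain ⟨G, hG⟩ := Quotient.exists_rep (restrictOn n (nhdsWithin_le_nhds (s := X)) g)
  rw [← hG] at hk ⊢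
  refine Filter.Germ.coe_eq.2 ?_
  filter_upwards [Filter.Germ.coe_eq.1 hk] with x hx
  exact eq_zero_of_pow_eq_zero hx

lemma IX_preimage_zero_eq_mId {H : (Fin 1 → ℂ) → ℂ} (hH : AnalyticAt ℂ H 0)
    (hH0 : mkOn H hH ∈ mId 1) (hfin : FiniteDimensional ℂ (On 1 ⧸ Jac 1 (mkOn H hH))) :
    IX 1 (H ⁻¹' {0}) = mId 1 := by
  have hzero : H 0 = 0 := by rwa [mem_mId_iff, evalZero_mkOn] at hH0
  obtain ⟨k, u, hu, hxu⟩ := exists_eq_coordG_pow_mul hH0 hfin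
  have hHX : mkOn H hH ∈ IX 1 (H ⁻¹' {0}) := mem_IX.2 (Eventually.of_forall fun _ hx => hx)
  have hx : coordG 0 ∈ IX 1 (H ⁻¹' {0}) :=
    isRadical_IX _ ⟨k + 1, ((IX 1 _).mul_unit_mem_iff_mem hu).1 (hxu ▸ hHX)⟩
  refine le_antisymm (fun g hg => ?_) ?_
  · obtain ⟨G, hG, rfl⟩ := exists_eq_mkOn g
    rw [mem_mId_iff, evalZero_mkOn]
    exact (mem_IX.1 hg).self_of_nhds hzero
  · rwa [mId_eq_span_coordG, Set.range_unique, Ideal.span_singleton_le_iff_mem]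

lemma BRIdeal_eq_span_of_IX_eq_mId {X : Set (Fin 1 → ℂ)} (hX : IX 1 X = mId 1) (f : On 1) :
    BRIdeal 1 X f = Ideal.span {coordG 0 * pd 0 f} := by
  have hm : mId 1 = Ideal.span {coordG 0} := by simpa using mId_one_pow 1
  have hΘ : ∀ δ : Fin 1 → On 1, δ ∈ ThetaX 1 X ↔ δ 0 ∈ mId 1 := fun δ => by
    change (∀ g ∈ IX 1 X, applyVF δ g ∈ IX 1 X) ↔ _
    simp only [hX, applyVF_fin_one]
    refine ⟨fun hδ => ?_, fun hδ g _ => Ideal.mul_mem_right _ _ hδ⟩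
    simpa [pd_coordG] using hδ (coordG 0) (coordG_mem_mId 0)
  ext g
  rw [Ideal.mem_span_singleton']
  constructor
  · rintro ⟨δ, hδ, rfl⟩
    obtain ⟨c, hc⟩ := Ideal.mem_span_singleton'.1 (hm ▸ (hΘ δ).1 hδ)
    exact ⟨c, by rw [← mul_assoc, hc]; exact (applyVF_fin_one δ f).symm⟩
  · rintro ⟨c, rfl⟩
    exact ⟨fun _ => c * coordG 0, (hΘ _).2 (Ideal.mul_mem_left _ _ (coordG_mem_mId 0)),
      (applyVF_fin_one _ f).trans (mul_assoc _ _ _)⟩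

lemma mem_Jac_fin_one {f : On 1} (hf : f ∈ mId 1)
    (hfin : FiniteDimensional ℂ (On 1 ⧸ Jac 1 f)) : f ∈ Jac 1 f :=
  (Jac 1 f).mem_of_dvd (associated_coordG_mul_pd hf hfin).dvd
    (Ideal.mul_mem_left _ _ (Ideal.subset_span ⟨0, rfl⟩))

end OneVariable

section MainTheorem

lemma eq_zero_of_mem_mId_zero {g : On 0} (hg : g ∈ mId 0) : g = 0 := by
  rwa [mId_eq_span_coordG, Set.range_eq_empty, Ideal.span_empty] at hg

lemma Jmin_le_BRIdeal_preimage_zero {f : On n} {H : (Fin n → ℂ) → ℂ} (hH : AnalyticAt ℂ H 0)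
    (hiso : FiniteDimensional ℂ (On n ⧸ Jac n (mkOn H hH))) :
    Jmin n f (mkOn H hH) ≤ BRIdeal n (H ⁻¹' {0}) f := by
  rcases n with _ | _ | n
  · exact (Jmin_eq_bot f _).trans_le bot_le
  · exact (Jmin_eq_bot (n := 1) f _).trans_le bot_le
  · exact Jmin_le_BRIdeal (IX_preimage_zero_eq_span (by omega) hH hiso)

lemma mem_BRIdeal_preimage_zero_iff {f : On n} {H : (Fin n → ℂ) → ℂ} (hH : AnalyticAt ℂ H 0)
    (hf2 : f ∈ mId n ^ 2) (hh2 : mkOn H hH ∈ mId n ^ 2)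
    (hffin : FiniteDimensional ℂ (On n ⧸ Jac n f))
    (hhfin : FiniteDimensional ℂ (On n ⧸ Jac n (mkOn H hH))) :
    f ∈ BRIdeal n (H ⁻¹' {0}) f ↔ f ∈ Jac n f ∧ mkOn H hH ∈ Jac n (mkOn H hH) ∧
      BRIdeal n (H ⁻¹' {0}) f ≤ Ideal.span {f} + Jmin n f (mkOn H hH) := by
  have hf := Ideal.pow_le_self two_ne_zero hf2
  have hh := Ideal.pow_le_self two_ne_zero hh2
  rcases n with _ | _ | n
  · have hJac : Jac 0 f = ⊥ := by rw [Jac, Set.range_eq_empty, Ideal.span_empty]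
    rw [eq_zero_of_mem_mId_zero hf, eq_zero_of_mem_mId_zero hh] at *
    exact iff_of_true (zero_mem _)
      ⟨zero_mem _, zero_mem _, (BRIdeal_le_Jac _ _).trans (hJac.trans_le bot_le)⟩
  · have hassoc := associated_coordG_mul_pd hf hffin
    have hfx : Ideal.span {coordG 0 * pd 0 f} = Ideal.span {f} :=
      le_antisymm (Ideal.span_singleton_le_span_singleton.2 hassoc.dvd')
        (Ideal.span_singleton_le_span_singleton.2 hassoc.dvd)
    rw [BRIdeal_eq_span_of_IX_eq_mId (IX_preimage_zero_eq_mId hH hh hhfin), hfx]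
    exact iff_of_true (Ideal.mem_span_singleton_self f)
      ⟨mem_Jac_fin_one hf hffin, mem_Jac_fin_one hh hhfin, le_sup_left⟩
  · exact mem_BRIdeal_iff_of_IX_eq_span (IX_preimage_zero_eq_span (by omega) hH hhfin) hf2 hh2
      hffin hhfin

theorem muX_eq_tauX_iff_pair_general (f : On n) {H : (Fin n → ℂ) → ℂ} (hH : AnalyticAt ℂ H 0)
    (hfsing : f ∈ mId n ^ 2) (hHsing : mkOn H hH ∈ mId n ^ 2)
    (hHiso : FiniteDimensional ℂ (On n ⧸ Jac n (mkOn H hH)))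
    (hfinX : FiniteDimensional ℂ (On n ⧸ BRIdeal n (H ⁻¹' {0}) f)) :
    muX n (H ⁻¹' {0}) f = tauX n (H ⁻¹' {0}) f ↔
      (mu n f = tau n f ∧ mu n (mkOn H hH) = tau n (mkOn H hH) ∧
       (Module.finrank ℂ (On n ⧸ (Ideal.span {f} + Jmin n f (mkOn H hH))) : ℤ) - mu n f =
        Module.finrank ℂ ((Fin n → On n) ⧸ (ThetaX n (H ⁻¹' {0}) ⊔ ThetaF n f))) := by
  have hfiso : FiniteDimensional ℂ (On n ⧸ Jac n f) :=
    finiteDimensional_quotient_of_le (BRIdeal_le_Jac (H ⁻¹' {0}) f)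
  have hJmin := Jmin_le_BRIdeal_preimage_zero (f := f) hH hHiso
  rw [muX_eq_tauX_iff, mem_BRIdeal_preimage_zero_iff hH hfsing hHsing hfiso hHiso, ← mu_eq_tau_iff,
    ← mu_eq_tau_iff]
  exact and_congr_right fun hmu =>
    and_congr_right' (finrank_sub_mu_eq_iff hfsing hJmin hmu).symm

/-- Corollary 2.6 (via the Lê–Greuel formula): `μ_X(f) = τ_X(f)` iff `μ(f) = τ(f)`,
`μ(h) = τ(h)` and `μ(f,h) = τ̄(f,h)`. -/
theorem muX_eq_tauX_iff_pair (n : ℕ)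
    (F : (Fin n → ℂ) → ℂ) (hF : AnalyticAt ℂ F 0) (hF0 : F 0 = 0)
    (H : (Fin n → ℂ) → ℂ) (hH : AnalyticAt ℂ H 0) (hH0 : H 0 = 0)
    (hFsing : mkOn F hF ∈ (mId n) ^ 2) (hHsing : mkOn H hH ∈ (mId n) ^ 2)
    (hFiso : FiniteDimensional ℂ (On n ⧸ Jac n (mkOn F hF)))
    (hHiso : FiniteDimensional ℂ (On n ⧸ Jac n (mkOn H hH)))
    (hfinX : FiniteDimensional ℂ (On n ⧸ BRIdeal n (H ⁻¹' {0}) (mkOn F hF)))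
    (hfinY : FiniteDimensional ℂ (On n ⧸ BRIdeal n (F ⁻¹' {0}) (mkOn H hH))) :
    muX n (H ⁻¹' {0}) (mkOn F hF) = tauX n (H ⁻¹' {0}) (mkOn F hF) ↔
      (mu n (mkOn F hF) = tau n (mkOn F hF) ∧
       mu n (mkOn H hH) = tau n (mkOn H hH) ∧
       (Module.finrank ℂ
          (On n ⧸ (Ideal.span {mkOn F hF} + Jmin n (mkOn F hF) (mkOn H hH))) : ℤ)
          - mu n (mkOn F hF) =
        Module.finrank ℂ
          ((Fin n → On n) ⧸ (ThetaX n (H ⁻¹' {0}) ⊔ ThetaF n (mkOn F hF)))) := by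
  exact muX_eq_tauX_iff_pair_general (mkOn F hF) hH hFsing hHsing hHiso hfinX

end MainTheorem

end
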